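/- arXiv:1003.1688 — 3 statements merged into one kernel-verified Lean document; each statement's English description precedes it below -/
import Mathlib

section
/- Let n be a positive integer, let 0 ≤ k ≤ 1, and let λ be a partition with a single part satisfying 2 ≤ λ_1 ≤ k+n (so that λ ≠ λ^t). Then the skew Schur functions s_{S(λ^t,k,n)} and s_{S(λ,k,n)} are NOT equal upon restricting to n+2 variables, i.e. after setting x_{n+3} = x_{n+4} = ⋯ = 0. -/
/-!
Write `K_D(a₁, a₂, a₃, …)` for the number of SSYT of shape `D` with the given content.  The proof
compares, for the two shapes, the signed count
`K_D(2, 0, a) + K_D(0, 2, a) - K_D(1, 1, a)`,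
which is the monomial coefficient of `x^a` in `p₂^⊥ s_D`.

In both shapes two cells of one row can never carry the two smallest entries, since the cell above
the right one would carry a still smaller entry (`NoRowPair`).  If `T` has one `1` and one `2`, in
different columns, then the two entries are independent: merging them to `1, 1` when the `1` lies
in the higher row, and to `2, 2` when the `2` does, is a bijection onto the tableaux with content
`(2, 0, a)` or `(0, 2, a)`.  Hence the signed count is minus the number of tableaux of content
`(1, 1, a)` with the `1` and the `2` in one column.

For the column foundation there is such a tableau `witness`, and `a` is taken to be its content in
the letters `3, …, n + 2`; this gives `K(2,0,a) + K(0,2,a) < K(1,1,a)` (`add_lt_of_witness`).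
For the row foundation there is none (`row_no_vertical`), so `K(1,1,a) ≤ K(2,0,a) + K(0,2,a)`
(`le_add_of_no_vertical`): if `k = 1` the shape has no cell that can hold such a `2`, while if
`k = 0` the first column must be `1, 2`, which leaves only `n - 1` columns for the `n` entries
equal to `3` prescribed by `a`.  So the three monomial coefficients cannot all agree.
-/

/-- The cells of the rotated staircase `Δ_n`, realized as the skew diagram
`(n^n)/δ_{n-1}`, placed in rows `0,…,n-1` and columns `k,…,n+k-1`
(each row right-justified; the row of length `i+1` is row `i`). -/
def staircaseCells (n k : ℕ) : Set (ℕ × ℕ) :=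
  {p | p.1 < n ∧ k + n - 1 - p.1 ≤ p.2 ∧ p.2 < n + k}

/-- The cells of the foundation `λ/δ_{k-1}`, placed in rows `n, n+1, …`;
row `n + i` contains the cells of row `i` of `λ/δ_{k-1}`. -/
def foundationCells (lam : ℕ → ℕ) (k n : ℕ) : Set (ℕ × ℕ) :=
  {p | n ≤ p.1 ∧ k - 1 - (p.1 - n) ≤ p.2 ∧ p.2 < lam (p.1 - n)}

/-- The staircase with bad foundation `𝒮(λ,k,n)`: the foundation `λ/δ_{k-1}`
is placed immediately below `Δ_n`, extending `k` columns to its left, so that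
rows overlap in exactly `λ₁ - k` columns. -/
def SBF (lam : ℕ → ℕ) (k n : ℕ) : Set (ℕ × ℕ) :=
  staircaseCells n k ∪ foundationCells lam k n

/-- `T` is a semistandard Young tableau of shape `D`: positive entries on `D`,
zero outside `D`, rows weakly increasing, columns strictly increasing. -/
def IsSSYT (D : Set (ℕ × ℕ)) (T : ℕ × ℕ → ℕ) : Prop :=
  (∀ p ∈ D, 0 < T p) ∧ (∀ p, p ∉ D → T p = 0) ∧
  (∀ i j1 j2, j1 ≤ j2 → (i, j1) ∈ D → (i, j2) ∈ D → T (i, j1) ≤ T (i, j2)) ∧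
  (∀ i1 i2 j, i1 < i2 → (i1, j) ∈ D → (i2, j) ∈ D → T (i1, j) < T (i2, j))

/-- The set of cells of `D` read up to (and including) cell `q`, when rows are
read right to left, from the top row to the bottom row. -/
def readUpTo (D : Set (ℕ × ℕ)) (q : ℕ × ℕ) : Set (ℕ × ℕ) :=
  {p ∈ D | p.1 < q.1 ∨ (p.1 = q.1 ∧ q.2 ≤ p.2)}

/-- The reading word of `T` is lattice: at every point while reading, for each
`v ≥ 1` the number of `v+1`'s read so far never exceeds the number of `v`'s. -/
def IsLattice (D : Set (ℕ × ℕ)) (T : ℕ × ℕ → ℕ) : Prop :=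
  ∀ q ∈ D, ∀ v, 1 ≤ v →
    ({p ∈ readUpTo D q | T p = v + 1}).ncard ≤ ({p ∈ readUpTo D q | T p = v}).ncard

/-- The number of entries of `T` (on the shape `D`) equal to `v`. -/
noncomputable def contentOf (D : Set (ℕ × ℕ)) (T : ℕ × ℕ → ℕ) (v : ℕ) : ℕ :=
  ({p ∈ D | T p = v}).ncard

/-- The number of SSYT of shape `D` with lattice reading word and content `ν`
(`ν v` = number of entries equal to `v`, for `v ≥ 1`).  By the
Littlewood-Richardson rule this is the coefficient of the Schur function `s_ν`
in the skew Schur function `s_D`. -/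
noncomputable def LRcount (D : Set (ℕ × ℕ)) (nu : ℕ → ℕ) : ℕ :=
  {T : ℕ × ℕ → ℕ | IsSSYT D T ∧ IsLattice D T ∧ ∀ v, 1 ≤ v → contentOf D T v = nu v}.ncard

/-- The number of SSYT of shape `D` with content `α`.  For `α` supported on
`{1,…,m}` this is the coefficient of the monomial `x^α` in the skew Schur
polynomial `s_D(x_1,…,x_m)`; hence `s_{D₁} = s_{D₂}` in `m` variables iff
`SSYTcount D₁ α = SSYTcount D₂ α` for all such `α`. -/
noncomputable def SSYTcount (D : Set (ℕ × ℕ)) (alpha : ℕ → ℕ) : ℕ :=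
  {T : ℕ × ℕ → ℕ | IsSSYT D T ∧ ∀ v, 1 ≤ v → contentOf D T v = alpha v}.ncard

/-- `lam` is a partition, recorded as its weakly decreasing, eventually zero
sequence of row lengths: `lam i` is the length of row `i+1`. -/
def IsPartition (lam : ℕ → ℕ) : Prop :=
  (∀ i j, i ≤ j → lam j ≤ lam i) ∧ ∃ N, ∀ i, N ≤ i → lam i = 0

/-! ### Contents and finiteness -/

/-- The content with `x` ones and `y` twos, and `a v` letters `v` for `v ≥ 3`. -/
def headContent (x y : ℕ) (a : ℕ → ℕ) (v : ℕ) : ℕ :=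
  if v = 1 then x else if v = 2 then y else a v

/-- The tableaux counted by `SSYTcount D alpha`. -/
def tabs (D : Set (ℕ × ℕ)) (alpha : ℕ → ℕ) : Set (ℕ × ℕ → ℕ) :=
  {T | IsSSYT D T ∧ ∀ v, 1 ≤ v → contentOf D T v = alpha v}

/-- Every cell of `D` with another cell of `D` to its left has a cell of `D` above it. -/
def NoRowPair (D : Set (ℕ × ℕ)) : Prop :=
  ∀ i l r, l < r → (i, l) ∈ D → (i, r) ∈ D → ∃ t < i, (t, r) ∈ D

/-- Merging the letter `u` into the letter `w`. -/
def mergeLetter (u w : ℕ) (T : ℕ × ℕ → ℕ) : ℕ × ℕ → ℕ :=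
  fun p => if T p = u then w else T p

lemma mem_of_pos {D : Set (ℕ × ℕ)} {T : ℕ × ℕ → ℕ} (h : IsSSYT D T) {p : ℕ × ℕ}
    (hp : T p ≠ 0) : p ∈ D := by
  by_contra hc
  exact hp (h.2.1 p hc)

lemma contentOf_eq {D : Set (ℕ × ℕ)} {T : ℕ × ℕ → ℕ} (h : IsSSYT D T) {v : ℕ} (hv : 1 ≤ v) :
    contentOf D T v = ({p | T p = v} : Set (ℕ × ℕ)).ncard := by
  unfold contentOf
  congr 1
  ext p
  simp only [Set.mem_ofPred_eq, and_iff_right_iff_imp]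
  intro hp
  exact mem_of_pos h (by omega)

lemma level_finite {D : Set (ℕ × ℕ)} (hD : D.Finite) {T : ℕ × ℕ → ℕ} (h : IsSSYT D T) {v : ℕ}
    (hv : 1 ≤ v) : ({p | T p = v} : Set (ℕ × ℕ)).Finite :=
  hD.subset fun p hp => mem_of_pos h (by simp only [Set.mem_ofPred_eq] at hp; omega)

lemma tabs_finite {D : Set (ℕ × ℕ)} (hD : D.Finite) {alpha : ℕ → ℕ} {N : ℕ}
    (hN : ∀ v, N < v → alpha v = 0) : (tabs D alpha).Finite := by
  have hb : ∀ T ∈ tabs D alpha, ∀ p, T p ≤ N := by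
    intro T hT p
    by_contra hc
    have h1 := hT.2 (T p) (by omega)
    rw [hN _ (by omega), contentOf_eq hT.1 (by omega),
      Set.ncard_eq_zero (level_finite hD hT.1 (by omega))] at h1
    have : p ∈ ({q | T q = T p} : Set (ℕ × ℕ)) := rfl
    rw [h1] at this
    exact this
  have : Finite D := hD
  refine Set.Finite.of_finite_image (f := fun T (p : D) => T p) ?_ ?_
  · refine (Set.Finite.pi' (t := fun _ : D => Set.Iic N) fun _ => Set.finite_Iic N).subset ?_
    rintro _ ⟨T, hT, rfl⟩ p
    exact hb T hT p
  · intro T hT T' hT' he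
    ext p
    by_cases hp : p ∈ D
    · exact congrFun he ⟨p, hp⟩
    · rw [hT.1.2.1 p hp, hT'.1.2.1 p hp]

/-! ### Merging the letters `1` and `2` -/

/-- A tableau with content `(1, 1, a)` has exactly one `1` and exactly one `2`. -/
lemma exists_cells {D : Set (ℕ × ℕ)} {a : ℕ → ℕ} {T : ℕ × ℕ → ℕ}
    (hT : T ∈ tabs D (headContent 1 1 a)) :
    ∃ p q, (∀ x, T x = 1 ↔ x = p) ∧ (∀ x, T x = 2 ↔ x = q) := by
  have h1 := hT.2 1 le_rfl
  have h2 := hT.2 2 (by norm_num)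
  rw [contentOf_eq hT.1 (by norm_num)] at h1 h2
  have e1 : headContent 1 1 a 1 = 1 := by simp [headContent]
  have e2 : headContent 1 1 a 2 = 1 := by simp [headContent]
  rw [e1] at h1
  rw [e2] at h2
  obtain ⟨p, hp⟩ := Set.ncard_eq_one.1 h1
  obtain ⟨q, hq⟩ := Set.ncard_eq_one.1 h2
  exact ⟨p, q, fun x => by simpa using Set.ext_iff.1 hp x,
    fun x => by simpa using Set.ext_iff.1 hq x⟩

/-- A unique `1` and a unique `2` lie in different rows: the entry above a `2` to the right of the
`1` would be a second `1`. -/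
lemma rows_ne {D : Set (ℕ × ℕ)} (hab : NoRowPair D) {T : ℕ × ℕ → ℕ} (hT : IsSSYT D T)
    {p q : ℕ × ℕ} (hp : ∀ x, T x = 1 ↔ x = p) (hq : ∀ x, T x = 2 ↔ x = q) : p.1 ≠ q.1 := by
  intro he
  obtain ⟨i, j⟩ := p
  obtain ⟨i', j'⟩ := q
  simp only at he
  subst he
  have e1 := (hp (i, j)).2 rfl
  have e2 := (hq (i, j')).2 rfl
  have m1 : (i, j) ∈ D := mem_of_pos hT (by omega)
  have m2 : (i, j') ∈ D := mem_of_pos hT (by omega)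
  rcases lt_trichotomy j j' with h | h | h
  · obtain ⟨r, hr, hm⟩ := hab i j j' h m1 m2
    have h3 := hT.2.2.2 r i j' hr hm m2
    have h4 := hT.1 _ hm
    have h5 := (hp (r, j')).1 (by omega)
    simp only [Prod.mk.injEq] at h5
    omega
  · subst h; omega
  · have := hT.2.2.1 i j' j h.le m2 m1
    omega

/-- Merging the letters `1` and `2` into one letter preserves semistandardness if they do not meet
in a column. -/
lemma merge_isSSYT {D : Set (ℕ × ℕ)} {T : ℕ × ℕ → ℕ} (hT : IsSSYT D T) {u w : ℕ}
    (huw : u = 2 ∧ w = 1 ∨ u = 1 ∧ w = 2)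
    (hV : ∀ i i' j, T (i, j) = 1 → T (i', j) = 2 → False) : IsSSYT D (mergeLetter u w T) := by
  refine ⟨fun p hp => ?_, fun p hp => ?_, fun i j1 j2 h m1 m2 => ?_, fun i1 i2 j h m1 m2 => ?_⟩
  · have := hT.1 p hp
    simp only [mergeLetter]; split_ifs <;> omega
  · have := hT.2.1 p hp
    simp only [mergeLetter]; split_ifs <;> omega
  · have := hT.2.2.1 i j1 j2 h m1 m2
    have h1 := hT.1 _ m1
    have h2 := hT.1 _ m2
    simp only [mergeLetter]; split_ifs <;> omega
  · have := hT.2.2.2 i1 i2 j h m1 m2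
    have h1 := hT.1 _ m1
    have h2 := hT.1 _ m2
    have h3 : ¬ (T (i1, j) = 1 ∧ T (i2, j) = 2) := fun hh => hV i1 i2 j hh.1 hh.2
    simp only [mergeLetter]; split_ifs <;> omega

lemma merge_mem {D : Set (ℕ × ℕ)} {a : ℕ → ℕ} {T : ℕ × ℕ → ℕ}
    (hT : T ∈ tabs D (headContent 1 1 a)) {u w : ℕ} (huw : u = 2 ∧ w = 1 ∨ u = 1 ∧ w = 2)
    (hV : ∀ i i' j, T (i, j) = 1 → T (i', j) = 2 → False) :
    mergeLetter u w T ∈ tabs D (headContent (if w = 1 then 2 else 0) (if w = 2 then 2 else 0) a) := by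
  have hS := merge_isSSYT hT.1 huw hV
  refine ⟨hS, fun v hv => ?_⟩
  obtain ⟨p, q, hp, hq⟩ := exists_cells hT
  have hne : p ≠ q := by
    rintro rfl
    have := (hp p).2 rfl
    have := (hq p).2 rfl
    omega
  rw [contentOf_eq hS hv]
  by_cases hvw : v = w
  · subst hvw
    have : ({x | mergeLetter u v T x = v} : Set (ℕ × ℕ)) = {p, q} := by
      ext x
      simp only [mergeLetter, Set.mem_ofPred_eq, Set.mem_insert_iff, Set.mem_singleton_iff,
        ← hp, ← hq]
      split_ifs <;> omega
    rw [this, Set.ncard_pair hne]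
    rcases huw with ⟨rfl, rfl⟩ | ⟨rfl, rfl⟩ <;> simp [headContent]
  · by_cases hvu : v = u
    · subst hvu
      have : ({x | mergeLetter v w T x = v} : Set (ℕ × ℕ)) = ∅ := by
        ext x
        simp only [mergeLetter, Set.mem_ofPred_eq, Set.mem_empty_iff_false, iff_false]
        split_ifs <;> omega
      rw [this, Set.ncard_empty]
      rcases huw with ⟨rfl, rfl⟩ | ⟨rfl, rfl⟩ <;> simp [headContent]
    · have : ({x | mergeLetter u w T x = v} : Set (ℕ × ℕ)) = {x | T x = v} := by
        ext x
        simp only [mergeLetter, Set.mem_ofPred_eq]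
        split_ifs <;> omega
      rw [this, ← contentOf_eq hT.1 hv, hT.2 v hv]
      have h1 : v ≠ 1 := by omega
      have h2 : v ≠ 2 := by omega
      simp [headContent, h1, h2]

/-- A filling with one `1` and one `2` is determined by its merge together with the information
which of the two letters lies in the higher row. -/
lemma merge_inj {T T' : ℕ × ℕ → ℕ} {p q p' q' : ℕ × ℕ}
    {u w : ℕ} (huw : u = 2 ∧ w = 1 ∨ u = 1 ∧ w = 2)
    (hp : ∀ x, T x = 1 ↔ x = p) (hq : ∀ x, T x = 2 ↔ x = q)
    (hp' : ∀ x, T' x = 1 ↔ x = p') (hq' : ∀ x, T' x = 2 ↔ x = q')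
    (ho : p.1 < q.1 ∧ p'.1 < q'.1 ∨ q.1 < p.1 ∧ q'.1 < p'.1)
    (he : mergeLetter u w T = mergeLetter u w T') : T = T' := by
  have hx : ∀ x, (T x = 1 ∨ T x = 2) ↔ (T' x = 1 ∨ T' x = 2) := by
    intro x
    have := congrFun he x
    simp only [mergeLetter] at this
    split_ifs at this <;> omega
  have h1 := hx p
  have h2 := hx q
  rw [hp, hq, hp', hq'] at h1 h2
  simp only [true_or, or_true, true_iff] at h1 h2
  have hpp : p = p' ∧ q = q' := by
    rcases h1 with h1 | h1 <;> rcases h2 with h2 | h2 <;> subst h1 <;> subst h2 <;>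
      first | exact ⟨rfl, rfl⟩ | omega
  obtain ⟨rfl, rfl⟩ := hpp
  ext x
  have h3 := congrFun he x
  have := hp x
  have := hq x
  have := hp' x
  have := hq' x
  simp only [mergeLetter] at h3
  split_ifs at h3 <;> grind

/-- If no tableau carries `1` and `2` in one column, merging `1` and `2` is injective on each
of the two row orders of these letters. -/
lemma le_add_of_no_vertical {D : Set (ℕ × ℕ)} (hD : D.Finite) (hab : NoRowPair D) {a : ℕ → ℕ}
    {N : ℕ} (hN2 : 2 ≤ N) (hN : ∀ v, N < v → a v = 0)
    (hV : ∀ T ∈ tabs D (headContent 1 1 a), ∀ i i' j, T (i, j) = 1 → T (i', j) = 2 → False) :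
    (tabs D (headContent 1 1 a)).ncard ≤
      (tabs D (headContent 2 0 a)).ncard + (tabs D (headContent 0 2 a)).ncard := by
  have hfin : ∀ x y, (tabs D (headContent x y a)).Finite := fun x y =>
    tabs_finite hD (N := N) fun v hv => by
      have h1 : v ≠ 1 := by omega
      have h2 : v ≠ 2 := by omega
      simp [headContent, h1, h2, hN v hv]
  -- `L` holds the tableaux whose `1` lies in a higher row than the `2`.
  let L : Set (ℕ × ℕ → ℕ) := {T | ∃ p q : ℕ × ℕ, T p = 1 ∧ T q = 2 ∧ p.1 < q.1}
  have h1 : (tabs D (headContent 1 1 a) ∩ L).ncard ≤ (tabs D (headContent 2 0 a)).ncard := by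
    refine Set.ncard_le_ncard_of_injOn (mergeLetter 2 1) ?_ ?_ (hfin 2 0)
    · rintro T ⟨hT, -⟩
      simpa using merge_mem hT (Or.inl ⟨rfl, rfl⟩) (hV T hT)
    · rintro T ⟨hT, hL⟩ T' ⟨hT', hL'⟩ he
      obtain ⟨p, q, hp, hq⟩ := exists_cells hT
      obtain ⟨p', q', hp', hq'⟩ := exists_cells hT'
      obtain ⟨x, y, hx, hy, hxy⟩ := hL
      obtain ⟨x', y', hx', hy', hxy'⟩ := hL'
      rw [hp] at hx; rw [hq] at hy; rw [hp'] at hx'; rw [hq'] at hy'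
      subst hx hy hx' hy'
      exact merge_inj (Or.inl ⟨rfl, rfl⟩) hp hq hp' hq' (Or.inl ⟨hxy, hxy'⟩) he
  have h2 : (tabs D (headContent 1 1 a) \ L).ncard ≤ (tabs D (headContent 0 2 a)).ncard := by
    refine Set.ncard_le_ncard_of_injOn (mergeLetter 1 2) ?_ ?_ (hfin 0 2)
    · rintro T ⟨hT, -⟩
      simpa using merge_mem hT (Or.inr ⟨rfl, rfl⟩) (hV T hT)
    · rintro T ⟨hT, hL⟩ T' ⟨hT', hL'⟩ he
      obtain ⟨p, q, hp, hq⟩ := exists_cells hT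
      obtain ⟨p', q', hp', hq'⟩ := exists_cells hT'
      have r := rows_ne hab hT.1 hp hq
      have r' := rows_ne hab hT'.1 hp' hq'
      have o : ¬ p.1 < q.1 := fun h => hL ⟨p, q, (hp p).2 rfl, (hq q).2 rfl, h⟩
      have o' : ¬ p'.1 < q'.1 := fun h => hL' ⟨p', q', (hp' p').2 rfl, (hq' q').2 rfl, h⟩
      exact merge_inj (Or.inr ⟨rfl, rfl⟩) hp hq hp' hq' (Or.inr ⟨by omega, by omega⟩) he
  have h3 := Set.ncard_inter_add_ncard_sdiff_eq_ncard (tabs D (headContent 1 1 a)) L (hfin 1 1)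
  omega

/-! ### Unmerging -/

/-- A tableau with two letters `w`, where `{u, w} = {1, 2}`, and no letter `u` arises by merging
`u` into `w` from a tableau with content `(1, 1, a)` whose `w` lies in a higher row than its
`u`, and in another column. -/
lemma exists_unmerge {D : Set (ℕ × ℕ)} (hab : NoRowPair D) {a : ℕ → ℕ}
    (hD : D.Finite) {S : ℕ × ℕ → ℕ} {u w : ℕ} (huw : u = 2 ∧ w = 1 ∨ u = 1 ∧ w = 2)
    (hS : S ∈ tabs D (headContent (if w = 1 then 2 else 0) (if w = 2 then 2 else 0) a)) :
    ∃ T ∈ tabs D (headContent 1 1 a), mergeLetter u w T = S ∧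
      ∃ p q : ℕ × ℕ, T p = w ∧ T q = u ∧ p.1 < q.1 ∧ p.2 ≠ q.2 := by
  have hSS := hS.1
  have hw : ({x | S x = w} : Set (ℕ × ℕ)).ncard = 2 := by
    rw [← contentOf_eq hSS (by omega), hS.2 w (by omega)]
    rcases huw with ⟨rfl, rfl⟩ | ⟨rfl, rfl⟩ <;> simp [headContent]
  have hu : ∀ x, S x ≠ u := by
    have h0 : ({x | S x = u} : Set (ℕ × ℕ)).ncard = 0 := by
      rw [← contentOf_eq hSS (by omega), hS.2 u (by omega)]
      rcases huw with ⟨rfl, rfl⟩ | ⟨rfl, rfl⟩ <;> simp [headContent]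
    rw [Set.ncard_eq_zero (level_finite hD hSS (by omega))] at h0
    intro x hx
    have : x ∈ ({x | S x = u} : Set (ℕ × ℕ)) := hx
    rw [h0] at this
    exact this
  obtain ⟨p, q, hpw, hqw, hrow, hpq⟩ : ∃ p q : ℕ × ℕ, S p = w ∧ S q = w ∧ p.1 < q.1 ∧
      ∀ x, S x = w ↔ x = p ∨ x = q := by
    obtain ⟨p, q, hne, hset⟩ := Set.ncard_eq_two.1 hw
    have hx : ∀ x, S x = w ↔ x = p ∨ x = q := fun x => by simpa using Set.ext_iff.1 hset x
    have e1 := (hx p).2 (Or.inl rfl)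
    have e2 := (hx q).2 (Or.inr rfl)
    -- The entry above the right cell of a row pair would be smaller than `w` and not equal to `u`.
    have key : ∀ i j j', j < j' → S (i, j) = w → S (i, j') = w → False := by
      intro i j j' hj g1 g2
      have m2 : (i, j') ∈ D := mem_of_pos hSS (by omega)
      obtain ⟨r, hr, hm⟩ := hab i j j' hj (mem_of_pos hSS (by omega)) m2
      have h3 := hSS.2.2.2 r i j' hr hm m2
      have h4 := hSS.1 _ hm
      have h5 := hu (r, j')
      omega
    rcases lt_trichotomy p.1 q.1 with h | h | h
    · exact ⟨p, q, e1, e2, h, hx⟩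
    · exfalso
      obtain ⟨i, j⟩ := p
      obtain ⟨i', j'⟩ := q
      simp only at h
      subst h
      rcases lt_trichotomy j j' with h | h | h
      · exact key _ _ _ h e1 e2
      · subst h; exact hne rfl
      · exact key _ _ _ h e2 e1
    · exact ⟨q, p, e2, e1, h, fun x => by rw [hx, or_comm]⟩
  have hpD : p ∈ D := mem_of_pos hSS (by omega)
  have hqD : q ∈ D := mem_of_pos hSS (by omega)
  have hcol : p.2 ≠ q.2 := by
    intro h
    have := hSS.2.2.2 p.1 q.1 p.2 hrow hpD (by rw [h]; exact hqD)
    rw [h] at this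
    simp only [Prod.mk.eta] at this
    rw [← h] at this
    simp only [Prod.mk.eta] at this
    omega
  have hnepq : p ≠ q := by rintro rfl; omega
  set T : ℕ × ℕ → ℕ := fun x => if x = q then u else S x with hTdef
  have hTq : T q = u := by simp [hTdef]
  have hTx : ∀ x, x ≠ q → T x = S x := fun x hx => by simp [hTdef, hx]
  -- The other cell with entry `w` is not in the row or column of `q`.
  have hrowq : ∀ j, (q.1, j) ≠ q → S (q.1, j) ≠ w := by
    intro j hj h
    rcases (hpq _).1 h with h | h
    · rw [← h] at hrow; simp at hrow
    · exact hj h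
  have hcolq : ∀ i, (i, q.2) ≠ q → S (i, q.2) ≠ w := by
    intro j hj h
    rcases (hpq _).1 h with h | h
    · rw [← h] at hcol; simp at hcol
    · exact hj h
  have hTS : IsSSYT D T := by
    refine ⟨fun x hx => ?_, fun x hx => ?_, fun i j1 j2 h m1 m2 => ?_, fun i1 i2 j h m1 m2 => ?_⟩
    · have := hSS.1 x hx
      simp only [hTdef]; split_ifs <;> omega
    · rw [hTx x (by rintro rfl; exact hx hqD)]
      exact hSS.2.1 x hx
    · have h0 := hSS.2.2.1 i j1 j2 h m1 m2
      have g1 := hSS.1 _ m1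
      have g2 := hSS.1 _ m2
      have n1 := hu (i, j1)
      have n2 := hu (i, j2)
      by_cases c1 : (i, j1) = q
      · by_cases c2 : (i, j2) = q
        · rw [c1, c2]
        · have := hrowq j2
          rw [← c1] at this hTq hqw
          rw [hTx _ c2, hTq]
          have := this (by rw [c1, ← congrArg Prod.fst c1]; exact c2)
          simp only at this
          omega
      · by_cases c2 : (i, j2) = q
        · have := hrowq j1
          rw [← c2] at this hTq hqw
          rw [hTx _ c1, hTq]
          have := this (by rw [c2, ← congrArg Prod.fst c2]; exact c1)
          simp only at this
          omega
        · rw [hTx _ c1, hTx _ c2]; exact h0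
    · have h0 := hSS.2.2.2 i1 i2 j h m1 m2
      have g1 := hSS.1 _ m1
      have g2 := hSS.1 _ m2
      have n1 := hu (i1, j)
      have n2 := hu (i2, j)
      by_cases c1 : (i1, j) = q
      · have c2 : (i2, j) ≠ q := by
          rw [← c1]; intro hh; simp only [Prod.mk.injEq] at hh; omega
        rw [hTx _ c2, c1, hTq]
        rw [c1] at h0
        omega
      · by_cases c2 : (i2, j) = q
        · rw [hTx _ c1, c2, hTq]
          rw [c2] at h0
          omega
        · rw [hTx _ c1, hTx _ c2]; exact h0
  have hmerge : mergeLetter u w T = S := by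
    ext x
    by_cases hx : x = q
    · subst hx; simp [mergeLetter, hTq, hqw]
    · simp [mergeLetter, hTx x hx, hu x]
  refine ⟨T, ⟨hTS, fun v hv => ?_⟩, hmerge, p, q, by rw [hTx p hnepq, hpw], hTq, hrow, hcol⟩
  rw [contentOf_eq hTS hv]
  by_cases hvu : v = u
  · subst hvu
    have : ({x | T x = v} : Set (ℕ × ℕ)) = {q} := by
      ext x
      simp only [Set.mem_ofPred_eq, Set.mem_singleton_iff]
      refine ⟨fun h => ?_, fun h => h ▸ hTq⟩
      by_contra hx
      exact hu x (by rw [← hTx x hx, h])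
    rw [this, Set.ncard_singleton]
    rcases huw with ⟨rfl, rfl⟩ | ⟨rfl, rfl⟩ <;> simp [headContent]
  · by_cases hvw : v = w
    · subst hvw
      have : ({x | T x = v} : Set (ℕ × ℕ)) = {p} := by
        ext x
        simp only [Set.mem_ofPred_eq, Set.mem_singleton_iff]
        refine ⟨fun h => ?_, fun h => by rw [h, hTx p hnepq, hpw]⟩
        have hx : x ≠ q := by
          rintro rfl
          exact hvu (by rw [← h, hTq])
        rw [hTx x hx, hpq] at h
        exact h.resolve_right hx
      rw [this, Set.ncard_singleton]
      rcases huw with ⟨rfl, rfl⟩ | ⟨rfl, rfl⟩ <;> simp [headContent]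
    · have : ({x | T x = v} : Set (ℕ × ℕ)) = {x | S x = v} := by
        ext x
        simp only [Set.mem_ofPred_eq]
        by_cases hx : x = q
        · subst hx; rw [hTq, hqw]; omega
        · rw [hTx x hx]
      rw [this, ← contentOf_eq hSS hv, hS.2 v hv]
      have h1 : v ≠ 1 := by omega
      have h2 : v ≠ 2 := by omega
      simp [headContent, h1, h2]

/-- Unmerging produces distinct tableaux with content `(1, 1, a)`, and never the tableau `W` with
`1` and `2` in one column, so the inequality is strict. -/
lemma add_lt_of_witness {D : Set (ℕ × ℕ)} (hD : D.Finite) (hab : NoRowPair D) {a : ℕ → ℕ}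
    {N : ℕ} (hN2 : 2 ≤ N) (hN : ∀ v, N < v → a v = 0)
    {W : ℕ × ℕ → ℕ} (hW : W ∈ tabs D (headContent 1 1 a)) {i i' j : ℕ} (h1 : W (i, j) = 1)
    (h2 : W (i', j) = 2) :
    (tabs D (headContent 2 0 a)).ncard + (tabs D (headContent 0 2 a)).ncard <
      (tabs D (headContent 1 1 a)).ncard := by
  have hfin : (tabs D (headContent 1 1 a)).Finite :=
    tabs_finite hD (N := N) fun v hv => by
      have h1 : v ≠ 1 := by omega
      have h2 : v ≠ 2 := by omega
      simp [headContent, h1, h2, hN v hv]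
  let C := tabs D (headContent 1 1 a)
  let X : Set (ℕ × ℕ → ℕ) :=
    {T | T ∈ C ∧ ∃ p q : ℕ × ℕ, T p = 1 ∧ T q = 2 ∧ p.1 < q.1 ∧ p.2 ≠ q.2}
  let Y : Set (ℕ × ℕ → ℕ) :=
    {T | T ∈ C ∧ ∃ p q : ℕ × ℕ, T p = 2 ∧ T q = 1 ∧ p.1 < q.1 ∧ p.2 ≠ q.2}
  have hX : X.Finite := hfin.subset fun T h => h.1
  have hY : Y.Finite := hfin.subset fun T h => h.1
  have hA : (tabs D (headContent 2 0 a)).ncard ≤ X.ncard := by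
    refine (Set.ncard_le_ncard (t := mergeLetter 2 1 '' X) ?_ (hX.image _)).trans
      (Set.ncard_image_le hX)
    intro S hS
    obtain ⟨T, hT, hm, h⟩ := exists_unmerge hab hD (u := 2) (w := 1) (Or.inl ⟨rfl, rfl⟩)
      (by simpa using hS)
    exact ⟨T, ⟨hT, h⟩, hm⟩
  have hB : (tabs D (headContent 0 2 a)).ncard ≤ Y.ncard := by
    refine (Set.ncard_le_ncard (t := mergeLetter 1 2 '' Y) ?_ (hY.image _)).trans
      (Set.ncard_image_le hY)
    intro S hS
    obtain ⟨T, hT, hm, h⟩ := exists_unmerge hab hD (u := 1) (w := 2) (Or.inr ⟨rfl, rfl⟩)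
      (by simpa using hS)
    exact ⟨T, ⟨hT, h⟩, hm⟩
  have hdisj : Disjoint X Y := by
    rw [Set.disjoint_left]
    rintro T ⟨hT, p, q, hp, hq, hlt, -⟩ ⟨-, p', q', hp', hq', hlt', -⟩
    obtain ⟨x, y, hx, hy⟩ := exists_cells hT
    rw [hx] at hp hq'
    rw [hy] at hq hp'
    subst hp hq hq' hp'
    omega
  have hlt : (X ∪ Y).ncard < C.ncard := by
    refine Set.ncard_lt_ncard ⟨?_, fun hsub => ?_⟩ hfin
    · rintro T (h | h) <;> exact h.1
    · obtain ⟨x, y, hx, hy⟩ := exists_cells hW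
      rw [hx] at h1
      rw [hy] at h2
      rcases hsub hW with ⟨-, p, q, hp, hq, -, hne⟩ | ⟨-, p, q, hp, hq, -, hne⟩
      · rw [hx] at hp
        rw [hy] at hq
        subst hp hq h1
        apply hne
        rw [← h2]
      · rw [hy] at hp
        rw [hx] at hq
        subst hp hq h1
        apply hne
        rw [← h2]
  rw [Set.ncard_union_eq hdisj hX hY] at hlt
  exact lt_of_le_of_lt (add_le_add hA hB) hlt

/-! ### The two shapes -/

lemma mem_col {n k m : ℕ} (hk : k ≤ 1) (i j : ℕ) :
    (i, j) ∈ SBF (fun i => if i < m then 1 else 0) k n ↔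
      (i < n ∧ k + n ≤ i + j + 1 ∧ j < n + k) ∨ (n ≤ i ∧ i < n + m ∧ j = 0) := by
  simp only [SBF, staircaseCells, foundationCells, Set.mem_union, Set.mem_ofPred_eq]
  split_ifs <;> omega

lemma mem_row {n k m : ℕ} (hk : k ≤ 1) (i j : ℕ) :
    (i, j) ∈ SBF (fun i => if i = 0 then m else 0) k n ↔
      (i < n ∧ k + n ≤ i + j + 1 ∧ j < n + k) ∨ (i = n ∧ j < m) := by
  simp only [SBF, staircaseCells, foundationCells, Set.mem_union, Set.mem_ofPred_eq]
  split_ifs <;> omega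

lemma finite_of_bound {D : Set (ℕ × ℕ)} {N : ℕ} (h : ∀ i j, (i, j) ∈ D → i ≤ N ∧ j ≤ N) :
    D.Finite :=
  ((Set.finite_Iic N).prod (Set.finite_Iic N)).subset fun p hp => h p.1 p.2 hp

open Classical in
/-- A tableau on the shape with column foundation: the leftmost column, which contains the
foundation, is filled with `1, 2, 3, …` and every other column with `3, 4, 5, …`. -/
noncomputable def witness (n k m : ℕ) : ℕ × ℕ → ℕ := fun p =>
  if p ∈ SBF (fun i => if i < m then 1 else 0) k n then
    (if p.2 = 0 then p.1 + 2 - k - n else p.1 + p.2 + 4 - k - n) else 0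

lemma witness_isSSYT {n k m : ℕ} (hk : k ≤ 1) :
    IsSSYT (SBF (fun i => if i < m then 1 else 0) k n) (witness n k m) := by
  refine ⟨fun p hp => ?_, fun p hp => ?_, fun i j1 j2 h m1 m2 => ?_, fun i1 i2 j h m1 m2 => ?_⟩
  · obtain ⟨i, j⟩ := p
    simp only [witness, hp, if_true]
    rw [mem_col hk] at hp
    split_ifs <;> omega
  · simp [witness, hp]
  · simp only [witness, m1, m2, if_true]
    rw [mem_col hk] at m1 m2
    split_ifs <;> omega
  · simp only [witness, m1, m2, if_true]
    rw [mem_col hk] at m1 m2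
    split_ifs <;> omega

lemma witness_eq_one {n k m : ℕ} (hn : 1 ≤ n) (hk : k ≤ 1) (hm : 2 ≤ m) (x : ℕ × ℕ) :
    witness n k m x = 1 ↔ x = (n + k - 1, 0) := by
  obtain ⟨i, j⟩ := x
  simp only [witness, mem_col hk, Prod.mk.injEq]
  split_ifs <;> constructor <;> intro h <;> first | exact h.elim | omega

lemma witness_eq_two {n k m : ℕ} (hk : k ≤ 1) (hm : 2 ≤ m) (x : ℕ × ℕ) :
    witness n k m x = 2 ↔ x = (n + k, 0) := by
  obtain ⟨i, j⟩ := x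
  simp only [witness, mem_col hk, Prod.mk.injEq]
  split_ifs <;> constructor <;> intro h <;> first | exact h.elim | omega

lemma witness_le {n k m : ℕ} (hk : k ≤ 1) (hmn : m ≤ k + n) (x : ℕ × ℕ) :
    witness n k m x ≤ n + 2 := by
  obtain ⟨i, j⟩ := x
  simp only [witness, mem_col hk]
  split_ifs <;> omega

/-- For `k = 0`, each of the `n` columns contains a `3`. -/
lemma witness_three {n m : ℕ} (hm : 2 ≤ m) :
    n ≤ contentOf (SBF (fun i => if i < m then 1 else 0) 0 n) (witness n 0 m) 3 := by
  rw [contentOf_eq (witness_isSSYT (by norm_num)) (by norm_num)]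
  have hfin : ({p | witness n 0 m p = 3} : Set (ℕ × ℕ)).Finite := by
    refine finite_of_bound (N := n + m) fun i j h => ?_
    simp only [Set.mem_ofPred_eq, witness, mem_col (Nat.zero_le 1)] at h
    split_ifs at h <;> omega
  have h := Set.ncard_le_ncard_of_injOn (s := (Finset.range n : Set ℕ))
    (t := {p | witness n 0 m p = 3})
    (fun j => (if j = 0 then n + 1 else n - 1 - j, j)) ?_ ?_ hfin
  · simpa [Set.ncard_coe_finset] using h
  · intro j hj
    simp only [Finset.coe_range, Set.mem_Iio] at hj
    simp only [Set.mem_ofPred_eq, witness, mem_col (Nat.zero_le 1)]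
    split_ifs <;> omega
  · intro j _ j' _ he
    exact (Prod.mk.inj he).2

lemma col_noRowPair {n k m : ℕ} (hk : k ≤ 1) :
    NoRowPair (SBF (fun i => if i < m then 1 else 0) k n) := by
  intro i j j' hj h h'
  rw [mem_col hk] at h h'
  refine ⟨i - 1, by omega, ?_⟩
  rw [mem_col hk]
  omega

lemma row_noRowPair {n k m : ℕ} (hn : 1 ≤ n) (hk : k ≤ 1) (hmn : m ≤ k + n) :
    NoRowPair (SBF (fun i => if i = 0 then m else 0) k n) := by
  intro i j j' hj h h'
  rw [mem_row hk] at h h'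
  refine ⟨i - 1, by omega, ?_⟩
  rw [mem_row hk]
  omega

/-- On the shape with row foundation, `1` and `2` cannot share a column if for `k = 0` the
letter `3` is to occur at least `n` times. -/
lemma row_no_vertical {n k m : ℕ} (hk : k ≤ 1) {a : ℕ → ℕ} (hn : 1 ≤ n)
    (ha : k = 0 → n ≤ a 3) {T : ℕ × ℕ → ℕ}
    (hT : T ∈ tabs (SBF (fun i => if i = 0 then m else 0) k n) (headContent 1 1 a))
    (hmn : m ≤ k + n) (i i' j : ℕ) (h1 : T (i, j) = 1) (h2 : T (i', j) = 2) : False := by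
  obtain ⟨p, q, hp, hq⟩ := exists_cells hT
  have hS := hT.1
  have m1 := mem_of_pos hS (p := (i, j)) (by omega)
  have m2 := mem_of_pos hS (p := (i', j)) (by omega)
  have hlt : i < i' := by
    rcases lt_trichotomy i i' with h | h | h
    · exact h
    · subst h; omega
    · have := hS.2.2.2 i' i j h m2 m1
      omega
  have hpe := (hp _).1 h1
  have hqe := (hq _).1 h2
  subst hpe hqe
  -- The cell holding the `2` starts its row: an entry to its left would be another `1` or `2`.
  have hleft : ∀ j', j' < j →
      (i', j') ∉ SBF (fun i => if i = 0 then m else 0) k n := by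
    intro j' hj' hm
    have g1 := hS.2.2.1 i' j' j hj'.le hm m2
    have g2 := hS.1 _ hm
    have g3 := hp (i', j')
    have g4 := hq (i', j')
    simp only [Prod.mk.injEq] at g3 g4
    omega
  have hl := hleft (j - 1)
  rw [mem_row hk] at hl m1 m2
  have hcase : k = 0 ∧ i' = n ∧ j = 0 ∧ i = n - 1 := by omega
  obtain ⟨rfl, rfl, rfl, rfl⟩ := hcase
  -- Now column `0` is exactly `1, 2`, and the other columns hold at most one `3` each.
  have h3 := hT.2 3 (by norm_num)
  rw [contentOf_eq hS (by norm_num)] at h3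
  simp only [headContent] at h3
  norm_num at h3
  have hle := Set.ncard_le_ncard_of_injOn (s := {x | T x = 3})
    (t := (Finset.Ioo 0 i' : Set ℕ)) Prod.snd ?_ ?_ (Finset.finite_toSet _)
  · rw [Set.ncard_coe_finset, Nat.card_Ioo] at hle
    have := ha rfl
    omega
  · rintro ⟨x, y⟩ hx
    simp only [Set.mem_ofPred_eq] at hx
    have hm := mem_of_pos hS (p := (x, y)) (by omega)
    rw [mem_row hk] at hm
    have hy : y ≠ 0 := by
      rintro rfl
      have : x = i' ∨ x = i' - 1 := by omega
      rcases this with rfl | rfl <;> omega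
    simp only [Finset.coe_Ioo, Set.mem_Ioo]
    omega
  · rintro ⟨x, y⟩ hx ⟨x', y'⟩ hx' he
    simp only at he
    subst he
    simp only [Set.mem_ofPred_eq] at hx hx'
    have hm := mem_of_pos hS (p := (x, y)) (by omega)
    have hm' := mem_of_pos hS (p := (x', y)) (by omega)
    rcases lt_trichotomy x x' with h | h | h
    · have := hS.2.2.2 x x' y h hm hm'; omega
    · rw [h]
    · have := hS.2.2.2 x' x y h hm' hm; omega

/-- Let `n ≥ 1`, `0 ≤ k ≤ 1`, and let `λ = (m)` be a
partition with a single part, `2 ≤ m ≤ k + n` (so `λ ≠ λᵗ`).  Then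
`s_{𝒮(λᵗ,k,n)}` and `s_{𝒮(λ,k,n)}` are NOT equal upon restricting to `n+2`
variables: some monomial coefficient (indexed by a content supported on
`{1,…,n+2}`) differs. -/
theorem singleRow_transpose_ne_in_nPlusTwo_variables
    (n k m : ℕ) (hn : 1 ≤ n) (hk : k ≤ 1) (hm : 2 ≤ m) (hmn : m ≤ k + n) :
    ∃ alpha : ℕ → ℕ, (∀ v, n + 2 < v → alpha v = 0) ∧
      SSYTcount (SBF (fun i => if i < m then 1 else 0) k n) alpha ≠
      SSYTcount (SBF (fun i => if i = 0 then m else 0) k n) alpha := by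
  set Dc := SBF (fun i => if i < m then 1 else 0) k n with hDc
  set Dr := SBF (fun i => if i = 0 then m else 0) k n with hDr
  have hcfin : Dc.Finite := finite_of_bound (N := n + m + k) fun i j h => by
    rw [hDc, mem_col hk] at h; omega
  have hrfin : Dr.Finite := finite_of_bound (N := n + m + k) fun i j h => by
    rw [hDr, mem_row hk] at h; omega
  have hWS : IsSSYT Dc (witness n k m) := witness_isSSYT hk
  set a : ℕ → ℕ := fun v => contentOf Dc (witness n k m) v with ha
  have ha0 : ∀ v, n + 2 < v → a v = 0 := by
    intro v hv
    simp only [ha]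
    rw [contentOf_eq hWS (by omega)]
    have : ({p | witness n k m p = v} : Set (ℕ × ℕ)) = ∅ := by
      ext x
      have := witness_le hk hmn x
      simp only [Set.mem_ofPred_eq, Set.mem_empty_iff_false, iff_false]
      omega
    rw [this, Set.ncard_empty]
  have hW : witness n k m ∈ tabs Dc (headContent 1 1 a) := by
    refine ⟨hWS, fun v hv => ?_⟩
    simp only [headContent]
    split_ifs with h1 h2
    · subst h1
      rw [contentOf_eq hWS le_rfl]
      simp [witness_eq_one hn hk hm]
    · subst h2
      rw [contentOf_eq hWS (by norm_num)]
      simp [witness_eq_two hk hm]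
    · rfl
  have hlt := add_lt_of_witness hcfin (col_noRowPair hk) (by omega) ha0 hW
    ((witness_eq_one hn hk hm _).2 rfl) ((witness_eq_two hk hm _).2 rfl)
  have hle := le_add_of_no_vertical hrfin (row_noRowPair hn hk hmn) (by omega) ha0
    fun T hT => row_no_vertical hk hn (by rintro rfl; exact witness_three hm) hT hmn
  by_contra hcon
  push Not at hcon
  have heq : ∀ x y, (tabs Dc (headContent x y a)).ncard = (tabs Dr (headContent x y a)).ncard := by
    intro x y
    refine hcon (headContent x y a) fun v hv => ?_
    have h1 : v ≠ 1 := by omega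
    have h2 : v ≠ 2 := by omega
    simp [headContent, h1, h2, ha0 v hv]
  rw [heq, heq, heq] at hlt
  omega
end

section
/- Let n be a positive integer, let 0 ≤ k ≤ 1, and let λ be a partition with a single part satisfying λ_1 ≤ k+n. Then s_{S(λ^t,k,n)} − s_{S(λ,k,n)} = Σ_A s_{ν(A)}, where the sum runs over all subsets A ⊆ {2−k, 3−k, …, n} with |A| ≤ λ_1 − 2, and ν(A) is the partition δ_n + Σ_{a∈A} e_a + (0^n, 1^{λ_1−|A|}) (that is, δ_n with 1 added in each position indexed by A, followed by λ_1 − |A| parts equal to 1 in positions n+1 through n+λ_1−|A|). -/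
/-- The content `ν(A) = δ_n + Σ_{a ∈ A} e_a + (0^n, 1^{m - |A|})` attached to a
subset `A`: the staircase `δ_n` with `1` added in each position indexed by
`A`, followed by `m - |A|` parts equal to `1` in positions `n+1,…,n+m-|A|`. -/
def nuA (n m : ℕ) (A : Finset ℕ) : ℕ → ℕ := fun v =>
  (if 1 ≤ v ∧ v ≤ n then n + 1 - v else 0) + (if v ∈ A then 1 else 0) +
  (if n + 1 ≤ v ∧ v ≤ n + (m - A.card) then 1 else 0)

/-! ### The forced filling of the staircase -/

/-- The filling of `Δ_n ∪ {c 0, …, c (m-1)}` whose staircase rows read `1, 2, 3, …` and whose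
foundation cell `c j` carries `b j`; it vanishes elsewhere. -/
def stairTab (n k : ℕ) {m : ℕ} (c : Fin m → ℕ × ℕ) (b : Fin m → ℕ) (p : ℕ × ℕ) : ℕ :=
  if p.1 < n ∧ k + n - 1 - p.1 ≤ p.2 ∧ p.2 < n + k then p.1 + p.2 + 2 - (n + k)
  else ∑ j, if c j = p then b j else 0

lemma staircaseCells_finite (n k : ℕ) : (staircaseCells n k).Finite := by
  apply Set.Finite.subset (Set.finite_Iio n |>.prod (Set.finite_Iio (n + k)))
  rintro ⟨i, j⟩ ⟨h1, _, h3⟩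
  exact ⟨h1, h3⟩

lemma shape_finite (n k : ℕ) {m : ℕ} (c : Fin m → ℕ × ℕ) :
    (staircaseCells n k ∪ Set.range c).Finite :=
  (staircaseCells_finite n k).union (Set.finite_range c)

/-- The staircase part of a lattice tableau is forced.  Columns force the entry in a cell to be at
least the expected one.  If the first deviating cell, in reading order, carried `v + 1`, then moving
each `v` read so far one cell down would inject the `v`'s into the `v + 1`'s and miss that cell. -/
lemma stair_forced {n k m : ℕ} {c : Fin m → ℕ × ℕ} (hc : ∀ j, n ≤ (c j).1) {T : ℕ × ℕ → ℕ}
    (hT : IsSSYT (staircaseCells n k ∪ Set.range c) T)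
    (hL : IsLattice (staircaseCells n k ∪ Set.range c) T) :
    ∀ i d j, j + d + 1 = n + k → (i, j) ∈ staircaseCells n k → T (i, j) + (n + k) = i + j + 2 := by
  have memlt : ∀ p ∈ staircaseCells n k ∪ Set.range c, p.1 < n → p ∈ staircaseCells n k := by
    rintro p (h | ⟨j, rfl⟩) hp
    · exact h
    · have := hc j; omega
  obtain ⟨hpos, -, hrow, hcol⟩ := hT
  intro i
  induction i using Nat.strong_induction_on with
  | _ i IH =>
  intro d
  induction d using Nat.strong_induction_on with
  | _ d IHd =>
  intro j hjd hij
  have hij' := hij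
  obtain ⟨h1, h2, h3⟩ := hij'
  simp only at h1 h2 h3
  have hge : i + j + 2 ≤ T (i, j) + (n + k) := by
    have h0 := hpos (i, j) (Or.inl hij)
    by_cases hl : i + j + 1 = n + k
    · omega
    · have hmem : (i - 1, j) ∈ staircaseCells n k := ⟨by simp only; omega, by simp only; omega, h3⟩
      have e := IH (i - 1) (by omega) d j hjd hmem
      have := hcol (i - 1) i j (by omega) (Or.inl hmem) (Or.inl hij)
      omega
  by_contra hne
  obtain ⟨v, hv⟩ : ∃ v, T (i, j) = v + 1 := ⟨T (i, j) - 1, by have := hpos (i, j) (Or.inl hij); omega⟩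
  have hlat := hL (i, j) (Or.inl hij) v (by omega)
  have hfin : ∀ S : ℕ × ℕ → Prop,
      {p ∈ readUpTo (staircaseCells n k ∪ Set.range c) (i, j) | S p}.Finite := fun S =>
    (shape_finite n k c).subset fun p hp => hp.1.1
  set X := {p ∈ readUpTo (staircaseCells n k ∪ Set.range c) (i, j) | T p = v} with hX
  set Y := {p ∈ readUpTo (staircaseCells n k ∪ Set.range c) (i, j) | T p = v + 1} with hY
  let g : ℕ × ℕ → ℕ × ℕ := fun p => (p.1 + 1, p.2)
  have key : ∀ p ∈ X, p ∈ staircaseCells n k ∧ p.1 < i ∧ (p.1 + 1 = i → j + 1 ≤ p.2) ∧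
      v + (n + k) = p.1 + p.2 + 2 := by
    rintro ⟨a, b⟩ ⟨⟨hD, hr⟩, hTv⟩
    simp only at hr hTv
    rcases hr with hr | ⟨rfl, hr⟩
    · have hs := memlt _ hD (by simp only; omega)
      have e := IH a hr (n + k - 1 - b) b (by have := hs.2.2; simp only at this; omega) hs
      refine ⟨hs, hr, ?_, by simp only; omega⟩
      simp only
      omega
    · have := hrow a j b hr (Or.inl hij) hD
      omega
  have hsub : insert (i, j) (g '' X) ⊆ Y := by
    rintro q (rfl | ⟨p, hp, rfl⟩)
    · exact ⟨⟨Or.inl hij, Or.inr ⟨rfl, le_rfl⟩⟩, hv⟩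
    · obtain ⟨⟨hs1, hs2, hs3⟩, ha, hb, he⟩ := key p hp
      have hm : g p ∈ staircaseCells n k :=
        ⟨by simp only [g]; omega, by simp only [g]; omega, hs3⟩
      refine ⟨⟨Or.inl hm, ?_⟩, ?_⟩
      · simp only [g]
        by_cases h : p.1 + 1 = i
        · exact Or.inr ⟨h, by have := hb h; omega⟩
        · left; omega
      · simp only [g] at hm ⊢
        by_cases h : p.1 + 1 = i
        · have := hb h
          rw [h] at hm ⊢
          have := IHd (n + k - 1 - p.2) (by omega) p.2 (by omega) hm
          omega
        · have := IH (p.1 + 1) (by omega) (n + k - 1 - p.2) p.2 (by omega) hm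
          omega
  have hginj : Function.Injective g := by
    rintro ⟨a, b⟩ ⟨a', b'⟩ h
    simp only [g, Prod.mk.injEq] at h ⊢
    omega
  have hnot : (i, j) ∉ g '' X := by
    rintro ⟨p, hp, he⟩
    obtain ⟨-, -, hb, -⟩ := key p hp
    simp only [g, Prod.mk.injEq] at he
    have := hb he.1
    omega
  have h4 := Set.ncard_le_ncard hsub (hfin _)
  rw [Set.ncard_insert_of_notMem hnot ((hfin _).image g), Set.ncard_image_of_injective _ hginj] at h4
  omega

/-! ### Counting letters and the lattice condition -/

lemma stair_count {n k v : ℕ} (hv : 1 ≤ v) {T : ℕ × ℕ → ℕ}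
    (hT : ∀ p ∈ staircaseCells n k, T p + (n + k) = p.1 + p.2 + 2) :
    {p ∈ staircaseCells n k | T p = v}.ncard = n + 1 - v := by
  have : {p ∈ staircaseCells n k | T p = v} =
      (fun t => (v - 1 + t, n + k - 1 - t)) '' (Finset.range (n + 1 - v) : Set ℕ) := by
    ext ⟨a, b⟩
    simp only [Set.mem_sep_iff, Set.mem_image, Finset.coe_range, Set.mem_Iio, Prod.mk.injEq]
    constructor
    · rintro ⟨hs, h⟩
      have e := hT _ hs
      obtain ⟨h1, h2, h3⟩ := hs
      simp only at h1 h2 h3 e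
      exact ⟨a - (v - 1), by omega, by omega, by omega⟩
    · rintro ⟨t, ht, rfl, rfl⟩
      have hs : (v - 1 + t, n + k - 1 - t) ∈ staircaseCells n k :=
        ⟨by simp only; omega, by simp only; omega, by simp only; omega⟩
      have e := hT _ hs
      simp only at e
      exact ⟨hs, by omega⟩
  rw [this, Set.ncard_image_of_injective, Set.ncard_coe_finset, Finset.card_range]
  intro a b h
  simp only [Prod.mk.injEq] at h
  omega

open Classical in
/-- Occurrences of `v` in a set of cells `R ⊇ Δ_n`: the staircase contributes `n + 1 - v`. -/
lemma count_split {n k m v : ℕ} (hv : 1 ≤ v) {c : Fin m → ℕ × ℕ} (hc : ∀ j, n ≤ (c j).1)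
    (hci : Function.Injective c) {T : ℕ × ℕ → ℕ}
    (hT : ∀ p ∈ staircaseCells n k, T p + (n + k) = p.1 + p.2 + 2)
    (R : ℕ × ℕ → Prop) (hR : ∀ p ∈ staircaseCells n k, R p) :
    {p | (p ∈ staircaseCells n k ∪ Set.range c ∧ R p) ∧ T p = v}.ncard =
      n + 1 - v + (Finset.univ.filter fun j => R (c j) ∧ T (c j) = v).card := by
  have : {p | (p ∈ staircaseCells n k ∪ Set.range c ∧ R p) ∧ T p = v} =
      {p ∈ staircaseCells n k | T p = v} ∪
        c '' ((Finset.univ.filter fun j => R (c j) ∧ T (c j) = v : Finset (Fin m)) : Set (Fin m)) := by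
    ext p
    simp only [Set.mem_ofPred_eq, Set.mem_union, Set.mem_range, Set.mem_image, Finset.coe_filter,
      Finset.mem_univ, true_and]
    constructor
    · rintro ⟨⟨h | ⟨j, rfl⟩, hr⟩, ht⟩
      · exact Or.inl ⟨h, ht⟩
      · exact Or.inr ⟨j, ⟨hr, ht⟩, rfl⟩
    · rintro (⟨h, ht⟩ | ⟨j, ⟨hr, ht⟩, rfl⟩)
      · exact ⟨⟨Or.inl h, hR p h⟩, ht⟩
      · exact ⟨⟨Or.inr ⟨j, rfl⟩, hr⟩, ht⟩
  rw [this, Set.ncard_union_eq _ ((staircaseCells_finite n k).subset fun p hp => hp.1)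
    (Set.toFinite _), stair_count hv hT, Set.ncard_image_of_injective _ hci, Set.ncard_coe_finset]
  rw [Set.disjoint_left]
  rintro _ ⟨hs, -⟩ ⟨j, -, rfl⟩
  have := hc j
  have := hs.1
  omega

open Classical in
/-- Once the staircase has its forced filling, only the lattice condition at the foundation cells
remains: on the staircase, moving each `v + 1` one cell up injects the `v + 1`'s into the `v`'s. -/
lemma lattice_iff {n k m : ℕ} {c : Fin m → ℕ × ℕ} (hc : ∀ j, n ≤ (c j).1)
    (hci : Function.Injective c) {T : ℕ × ℕ → ℕ}
    (hT : ∀ p ∈ staircaseCells n k, T p + (n + k) = p.1 + p.2 + 2) :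
    IsLattice (staircaseCells n k ∪ Set.range c) T ↔
      ∀ (j : Fin m) (v : ℕ), 1 ≤ v →
        n + 1 - (v + 1) + (Finset.univ.filter fun j' => ((c j').1 < (c j).1 ∨
          (c j').1 = (c j).1 ∧ (c j).2 ≤ (c j').2) ∧ T (c j') = v + 1).card ≤
        n + 1 - v + (Finset.univ.filter fun j' => ((c j').1 < (c j).1 ∨
          (c j').1 = (c j).1 ∧ (c j).2 ≤ (c j').2) ∧ T (c j') = v).card := by
  have hcount : ∀ (j : Fin m) (v : ℕ), 1 ≤ v →
      {p ∈ readUpTo (staircaseCells n k ∪ Set.range c) (c j) | T p = v}.ncard =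
        n + 1 - v + (Finset.univ.filter fun j' => ((c j').1 < (c j).1 ∨
          (c j').1 = (c j).1 ∧ (c j).2 ≤ (c j').2) ∧ T (c j') = v).card := by
    intro j v hv
    convert count_split hv hc hci hT
      (fun p => p.1 < (c j).1 ∨ p.1 = (c j).1 ∧ (c j).2 ≤ p.2)
      (fun p hp => Or.inl (lt_of_lt_of_le hp.1 (hc j)))
    exact Iff.rfl
  constructor
  · intro h j v hv
    have := h (c j) (Or.inr ⟨j, rfl⟩) v hv
    rwa [hcount j v hv, hcount j (v + 1) (by omega)] at this
  · rintro h q (hq | ⟨j, rfl⟩) v hv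
    · have hs : ∀ p ∈ readUpTo (staircaseCells n k ∪ Set.range c) q, p ∈ staircaseCells n k := by
        rintro p ⟨hp | ⟨j, rfl⟩, hr⟩
        · exact hp
        · have := hq.1
          have := hc j
          omega
      refine Set.ncard_le_ncard_of_injOn (fun p => (p.1 - 1, p.2)) ?_ ?_
        ((shape_finite n k c).subset fun p hp => hp.1.1)
      · rintro p ⟨hp, hv'⟩
        have hps := hs p hp
        have e := hT p hps
        obtain ⟨h1, h2, h3⟩ := hps
        have hm : (p.1 - 1, p.2) ∈ staircaseCells n k :=
          ⟨by simp only; omega, by simp only; omega, h3⟩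
        have e' := hT _ hm
        simp only at e'
        have := hp.2
        exact ⟨⟨Or.inl hm, by simp only; omega⟩, by omega⟩
      · rintro p ⟨hp, hv1⟩ p' ⟨hp', hv2⟩ he
        have e := hT p (hs p hp)
        have e' := hT p' (hs p' hp')
        simp only [Prod.mk.injEq] at he
        ext <;> omega
    · rw [hcount j v hv, hcount j (v + 1) (by omega)]
      exact h j v hv

/-! ### From tableaux to sets of letters -/

lemma stairTab_stair {n k m : ℕ} (c : Fin m → ℕ × ℕ) (b : Fin m → ℕ) :
    ∀ p ∈ staircaseCells n k, stairTab n k c b p + (n + k) = p.1 + p.2 + 2 := by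
  intro p hp
  have hp' := hp
  obtain ⟨h1, h2, h3⟩ := hp'
  rw [stairTab, if_pos ⟨h1, h2, h3⟩]
  omega

lemma stairTab_cell {n k m : ℕ} {c : Fin m → ℕ × ℕ} (hc : ∀ j, n ≤ (c j).1)
    (hci : Function.Injective c) (b : Fin m → ℕ) (j : Fin m) : stairTab n k c b (c j) = b j := by
  rw [stairTab, if_neg (by have := hc j; omega)]
  simp [hci.eq_iff]

lemma stairTab_off {n k m : ℕ} (c : Fin m → ℕ × ℕ) (b : Fin m → ℕ) (p : ℕ × ℕ)
    (hp : p ∉ staircaseCells n k ∪ Set.range c) : stairTab n k c b p = 0 := by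
  have hp' : ¬ (p.1 < n ∧ k + n - 1 - p.1 ≤ p.2 ∧ p.2 < n + k) := fun h => hp (Or.inl h)
  rw [stairTab, if_neg hp']
  apply Finset.sum_eq_zero
  intro j _
  rw [if_neg fun h => hp (Or.inr ⟨j, h⟩)]

/-- If the foundation cells of the lattice tableaux are filled by exactly the increasing
enumerations of the `m`-sets satisfying `Q`, then the LR coefficient counts such sets, the content
being `δ_n` plus the indicator of the set. -/
lemma LRcount_eq {n k m : ℕ} {c : Fin m → ℕ × ℕ} (hc : ∀ j, n ≤ (c j).1)
    (hci : Function.Injective c) (Q : Finset ℕ → Prop)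
    (hQ : ∀ T, (IsSSYT (staircaseCells n k ∪ Set.range c) T ∧
        IsLattice (staircaseCells n k ∪ Set.range c) T) ↔
      ((∀ p, p ∉ staircaseCells n k ∪ Set.range c → T p = 0) ∧
        (∀ p ∈ staircaseCells n k, T p + (n + k) = p.1 + p.2 + 2) ∧
        StrictMono (T ∘ c) ∧ Q (Finset.univ.image (T ∘ c))))
    (nu : ℕ → ℕ) :
    LRcount (staircaseCells n k ∪ Set.range c) nu =
      {B : Finset ℕ | B.card = m ∧ Q B ∧
        ∀ v, 1 ≤ v → n + 1 - v + (if v ∈ B then 1 else 0) = nu v}.ncard := by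
  classical
  have hcont : ∀ T : ℕ × ℕ → ℕ, (∀ p ∈ staircaseCells n k, T p + (n + k) = p.1 + p.2 + 2) →
      StrictMono (T ∘ c) → ∀ v, 1 ≤ v → contentOf (staircaseCells n k ∪ Set.range c) T v =
        n + 1 - v + (if v ∈ Finset.univ.image (T ∘ c) then 1 else 0) := by
    intro T hs hmono v hv
    have := count_split hv hc hci hs (fun _ => True) (fun _ _ => trivial)
    simp only [and_true, true_and] at this
    rw [contentOf, this]
    congr 1
    split_ifs with h
    · obtain ⟨j, -, hj⟩ := Finset.mem_image.1 h
      rw [Finset.card_eq_one]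
      refine ⟨j, ?_⟩
      ext j'
      simp only [Finset.mem_filter, Finset.mem_univ, true_and, Finset.mem_singleton]
      rw [← hj]
      exact hmono.injective.eq_iff (a := j') (b := j)
    · rw [Finset.card_eq_zero, Finset.filter_eq_empty_iff]
      intro j _ hj
      exact h (Finset.mem_image.2 ⟨j, Finset.mem_univ _, hj⟩)
  rw [LRcount]
  refine Set.ncard_congr (fun T _ => Finset.univ.image (T ∘ c)) ?_ ?_ ?_
  · rintro T ⟨h1, h2, h3⟩
    obtain ⟨-, hs, hm, hq⟩ := (hQ T).1 ⟨h1, h2⟩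
    refine ⟨?_, hq, fun v hv => ?_⟩
    · rw [Finset.card_image_of_injective _ hm.injective]; simp
    · rw [← h3 v hv, hcont T hs hm v hv]
  · rintro T T' ⟨h1, h2, -⟩ ⟨h1', h2', -⟩ he
    obtain ⟨h0, hs, hm, -⟩ := (hQ T).1 ⟨h1, h2⟩
    obtain ⟨h0', hs', hm', -⟩ := (hQ T').1 ⟨h1', h2'⟩
    have hr : T ∘ c = T' ∘ c := by
      apply (StrictMono.range_inj hm hm').1
      have := congrArg (fun s : Finset ℕ => (s : Set ℕ)) he
      simpa [Function.comp_def] using this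
    funext p
    by_cases hp : p ∈ staircaseCells n k ∪ Set.range c
    · rcases hp with hp | ⟨j, rfl⟩
      · have := hs p hp
        have := hs' p hp
        omega
      · exact congrFun hr j
    · rw [h0 p hp, h0' p hp]
  · rintro B ⟨hB, hq, hnu⟩
    set b : Fin m → ℕ := fun j => B.orderEmbOfFin hB j with hb
    have hbc : stairTab n k c b ∘ c = b := funext fun j => stairTab_cell hc hci b j
    have him : Finset.univ.image b = B := Finset.image_orderEmbOfFin_univ B hB
    have hmono : StrictMono b := (B.orderEmbOfFin hB).strictMono
    have hv := (hQ (stairTab n k c b)).2 ⟨stairTab_off c b, stairTab_stair c b, by rwa [hbc],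
      by rwa [hbc, him]⟩
    refine ⟨stairTab n k c b, ⟨hv.1, hv.2, fun v hv' => ?_⟩, by rw [hbc, him]⟩
    rw [hcont _ (stairTab_stair c b) (by rwa [hbc]) v hv', hbc, him]
    exact hnu v hv'

/-! ### The two foundations -/

lemma SBF_row (n k m : ℕ) (hk : k ≤ 1) :
    SBF (fun i => if i = 0 then m else 0) k n =
      staircaseCells n k ∪ Set.range fun j : Fin m => (n, (j : ℕ)) := by
  rw [SBF]
  congr 1
  ext ⟨a, b⟩
  simp only [foundationCells, Set.mem_ofPred_eq, Set.mem_range, Prod.mk.injEq]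
  constructor
  · rintro ⟨h1, h2, h3⟩
    split_ifs at h3 with h
    · exact ⟨⟨b, h3⟩, by omega, rfl⟩
    · omega
  · rintro ⟨j, rfl, rfl⟩
    exact ⟨le_rfl, by omega, by simp⟩

lemma SBF_col (n k m : ℕ) (hk : k ≤ 1) :
    SBF (fun i => if i < m then 1 else 0) k n =
      staircaseCells n k ∪ Set.range fun j : Fin m => (n + (j : ℕ), 0) := by
  rw [SBF]
  congr 1
  ext ⟨a, b⟩
  simp only [foundationCells, Set.mem_ofPred_eq, Set.mem_range, Prod.mk.injEq]
  constructor
  · rintro ⟨h1, h2, h3⟩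
    split_ifs at h3 with h
    · exact ⟨⟨a - n, h⟩, by simp only; omega, by omega⟩
    · omega
  · rintro ⟨j, rfl, rfl⟩
    exact ⟨by omega, by omega, by simp⟩

lemma card_filter_le_one {m v : ℕ} {b : Fin m → ℕ} (hb : StrictMono b) (P : Fin m → Prop)
    [DecidablePred fun j => P j ∧ b j = v] :
    (Finset.univ.filter fun j => P j ∧ b j = v).card ≤ 1 := by
  rw [Finset.card_le_one]
  intro x hx y hy
  simp only [Finset.mem_filter] at hx hy
  exact hb.injective (hx.2.2.trans hy.2.2.symm)

open Classical in
/-- Over a single-row foundation the lattice tableaux are given by the `m`-subsets of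
`{2-k, …, n+1}`: as the row is read weakly decreasingly, no letter can be supplied by the row
itself, so each of `2, …, n+1` is available once; the letter `1` fits only in the cell with no
staircase cell above it, which exists when `k = 1`. -/
lemma row_char {n k m : ℕ} (hn : 1 ≤ n) (hk : k ≤ 1) (hmn : m ≤ k + n) (T : ℕ × ℕ → ℕ) :
    let c : Fin m → ℕ × ℕ := fun j => (n, (j : ℕ))
    (IsSSYT (staircaseCells n k ∪ Set.range c) T ∧
        IsLattice (staircaseCells n k ∪ Set.range c) T) ↔
      ((∀ p, p ∉ staircaseCells n k ∪ Set.range c → T p = 0) ∧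
        (∀ p ∈ staircaseCells n k, T p + (n + k) = p.1 + p.2 + 2) ∧
        StrictMono (T ∘ c) ∧ ∀ x ∈ Finset.univ.image (T ∘ c), 2 - k ≤ x ∧ x ≤ n + 1) := by
  intro c
  have hc : ∀ j, n ≤ (c j).1 := fun j => le_rfl
  have hci : Function.Injective c := fun i j h => by
    simp only [c, Prod.mk.injEq, true_and] at h
    exact Fin.ext h
  constructor
  · rintro ⟨hT, hL⟩
    have hs : ∀ p ∈ staircaseCells n k, T p + (n + k) = p.1 + p.2 + 2 := fun p hp =>
      stair_forced hc hT hL p.1 (n + k - 1 - p.2) p.2 (by have := hp.2.2; omega) hp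
    have hl := (lattice_iff hc hci hs).1 hL
    obtain ⟨hpos, hoff, hrow, hcol⟩ := hT
    have hmem : ∀ j, c j ∈ staircaseCells n k ∪ Set.range c := fun j => Or.inr ⟨j, rfl⟩
    have hlow : ∀ j : Fin m, 2 - k ≤ T (c j) ∧ (0 < (j : ℕ) → 2 ≤ T (c j)) := by
      intro j
      have h0 := hpos _ (hmem j)
      by_cases hj : k ≤ (j : ℕ)
      · have hm : (n - 1, (j : ℕ)) ∈ staircaseCells n k :=
          ⟨by simp only; omega, by simp only; omega, by have := j.2; simp only; omega⟩
        have h1 := hpos _ (Or.inl hm)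
        have h2 := hcol (n - 1) n j (by omega) (Or.inl hm) (hmem j)
        exact ⟨by simp only [c]; omega, fun _ => by simp only [c]; omega⟩
      · exact ⟨by omega, by omega⟩
    have hmonoW : ∀ i j : Fin m, i ≤ j → T (c i) ≤ T (c j) := fun i j h =>
      hrow n i j h (hmem i) (hmem j)
    have hzero : ∀ (j : Fin m) (v : ℕ), T (c j) = v + 1 →
        (Finset.univ.filter fun j' => ((c j').1 < (c j).1 ∨
          (c j').1 = (c j).1 ∧ (c j).2 ≤ (c j').2) ∧ T (c j') = v).card = 0 := by
      intro j v hv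
      rw [Finset.card_eq_zero, Finset.filter_eq_empty_iff]
      rintro j' - ⟨hr, ht⟩
      have hle : j ≤ j' := by simp only [c] at hr; omega
      have := hmonoW j j' hle
      omega
    refine ⟨hoff, hs, ?_, ?_⟩
    · intro i j hij
      rcases (hmonoW i j hij.le).lt_or_eq with h | h
      · exact h
      · exfalso
        have h2 := (hlow j).2 (by have : (i : ℕ) < j := hij; omega)
        obtain ⟨v, hv⟩ : ∃ v, T (c i) = v + 1 := ⟨T (c i) - 1, by omega⟩
        have := hl i v (by omega)
        rw [hzero i v hv] at this
        have h3 : 1 < (Finset.univ.filter fun j' => ((c j').1 < (c i).1 ∨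
          (c j').1 = (c i).1 ∧ (c i).2 ≤ (c j').2) ∧ T (c j') = v + 1).card := by
          rw [Finset.one_lt_card]
          refine ⟨i, ?_, j, ?_, hij.ne⟩
          · simp [hv]
          · simp only [Finset.mem_filter, Finset.mem_univ, true_and]
            exact ⟨Or.inr ⟨rfl, hij.le⟩, h.symm.trans hv⟩
        omega
    · intro x hx
      obtain ⟨j, -, rfl⟩ := Finset.mem_image.1 hx
      refine ⟨(hlow j).1, ?_⟩
      by_contra hgt
      simp only [Function.comp] at hgt
      obtain ⟨v, hv⟩ : ∃ v, T (c j) = v + 1 := ⟨T (c j) - 1, by omega⟩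
      have := hl j v (by omega)
      rw [hzero j v hv] at this
      have h3 : 0 < (Finset.univ.filter fun j' => ((c j').1 < (c j).1 ∨
          (c j').1 = (c j).1 ∧ (c j).2 ≤ (c j').2) ∧ T (c j') = v + 1).card := by
        rw [Finset.card_pos]
        exact ⟨j, by simp [hv]⟩
      omega
  · rintro ⟨hoff, hs, hmono, hb⟩
    have hb' : ∀ j, 2 - k ≤ T (c j) ∧ T (c j) ≤ n + 1 := fun j =>
      hb _ (Finset.mem_image.2 ⟨j, Finset.mem_univ _, rfl⟩)
    have hgrow : ∀ (t : ℕ) (h : t < m), 2 - k + t ≤ T (c ⟨t, h⟩) := by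
      intro t
      induction t with
      | zero => intro h; exact (hb' _).1
      | succ t ih =>
        intro h
        have h1 := ih (by omega)
        have h2 : T (c ⟨t, by omega⟩) < T (c ⟨t + 1, h⟩) := hmono (by simp)
        omega
    refine ⟨⟨?_, hoff, ?_, ?_⟩, ?_⟩
    · rintro p (hp | ⟨j, rfl⟩)
      · have := hs p hp
        obtain ⟨h1, h2, h3⟩ := hp
        omega
      · have := (hb' j).1; omega
    · rintro i j1 j2 hj (h1 | ⟨x, h1⟩) (h2 | ⟨y, h2⟩)
      · have e1 := hs _ h1
        have e2 := hs _ h2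
        simp only at e1 e2
        omega
      · have := h1.1
        simp only [c, Prod.mk.injEq] at h2 this
        omega
      · have := h2.1
        simp only [c, Prod.mk.injEq] at h1 this
        omega
      · rw [← h1, ← h2]
        simp only [c, Prod.mk.injEq] at h1 h2
        exact hmono.monotone (Fin.le_def.2 (by omega))
    · rintro i1 i2 j hi (h1 | ⟨x, h1⟩) (h2 | ⟨y, h2⟩)
      · have e1 := hs _ h1
        have e2 := hs _ h2
        simp only at e1 e2
        omega
      · have e1 := hs _ h1
        have g := hgrow y y.2
        have := h1.1
        rw [← h2]
        simp only [c, Prod.mk.injEq, Fin.eta] at h2 this e1 g ⊢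
        omega
      · have := h2.1
        simp only [c, Prod.mk.injEq] at h1 this
        omega
      · simp only [c, Prod.mk.injEq] at h1 h2
        omega
    · rw [lattice_iff hc hci hs]
      intro j v hv
      rcases Nat.eq_zero_or_pos (Finset.univ.filter fun j' => ((c j').1 < (c j).1 ∨
          (c j').1 = (c j).1 ∧ (c j).2 ≤ (c j').2) ∧ T (c j') = v + 1).card with h | h
      · omega
      · have h1 := card_filter_le_one (v := v + 1) hmono (fun j' => (c j').1 < (c j).1 ∨
          (c j').1 = (c j).1 ∧ (c j).2 ≤ (c j').2)
        simp only [Function.comp] at h1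
        obtain ⟨x, hx⟩ := Finset.card_pos.1 h
        simp only [Finset.mem_filter] at hx
        have := (hb' x).2
        omega

open Classical in
/-- Over a single-column foundation the lattice tableaux are given by the `m`-sets of letters
`≥ 2-k` in which every letter beyond `n+1` comes with its predecessor, since the
staircase supplies each of the letters `1, …, n` in excess of the next one, but none beyond `n`. -/
lemma col_char {n k m : ℕ} (hn : 1 ≤ n) (hk : k ≤ 1) (T : ℕ × ℕ → ℕ) :
    let c : Fin m → ℕ × ℕ := fun j => (n + (j : ℕ), 0)
    (IsSSYT (staircaseCells n k ∪ Set.range c) T ∧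
        IsLattice (staircaseCells n k ∪ Set.range c) T) ↔
      ((∀ p, p ∉ staircaseCells n k ∪ Set.range c → T p = 0) ∧
        (∀ p ∈ staircaseCells n k, T p + (n + k) = p.1 + p.2 + 2) ∧
        StrictMono (T ∘ c) ∧ ((∀ x ∈ Finset.univ.image (T ∘ c), 2 - k ≤ x) ∧
          ∀ x, n + 1 ≤ x → x + 1 ∈ Finset.univ.image (T ∘ c) →
            x ∈ Finset.univ.image (T ∘ c))) := by
  intro c
  have hc : ∀ j, n ≤ (c j).1 := fun j => by simp only [c]; omega
  have hci : Function.Injective c := fun i j h => by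
    simp only [c, Prod.mk.injEq, and_true] at h
    exact Fin.ext (by omega)
  constructor
  · rintro ⟨hT, hL⟩
    have hs : ∀ p ∈ staircaseCells n k, T p + (n + k) = p.1 + p.2 + 2 := fun p hp =>
      stair_forced hc hT hL p.1 (n + k - 1 - p.2) p.2 (by have := hp.2.2; omega) hp
    have hl := (lattice_iff hc hci hs).1 hL
    obtain ⟨hpos, hoff, hrow, hcol⟩ := hT
    have hmem : ∀ j, c j ∈ staircaseCells n k ∪ Set.range c := fun j => Or.inr ⟨j, rfl⟩
    refine ⟨hoff, hs, ?_, ?_, ?_⟩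
    · intro i j hij
      exact hcol _ _ 0 (by have : (i : ℕ) < j := hij; omega) (hmem i) (hmem j)
    · intro x hx
      obtain ⟨j, -, rfl⟩ := Finset.mem_image.1 hx
      have h0 := hpos _ (hmem j)
      simp only [Function.comp]
      by_cases hk0 : k = 0
      · have hm : (n - 1, 0) ∈ staircaseCells n k :=
          ⟨by simp only; omega, by simp only; omega, by simp only; omega⟩
        have h1 := hpos _ (Or.inl hm)
        have h2 := hcol (n - 1) (n + j) 0 (by omega) (Or.inl hm) (hmem j)
        simp only [c]
        omega
      · omega
    · intro x hx hx1
      obtain ⟨j, -, hj⟩ := Finset.mem_image.1 hx1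
      have := hl j x (by omega)
      have h3 : 0 < (Finset.univ.filter fun j' => ((c j').1 < (c j).1 ∨
          (c j').1 = (c j).1 ∧ (c j).2 ≤ (c j').2) ∧ T (c j') = x + 1).card := by
        rw [Finset.card_pos]
        exact ⟨j, by simpa using hj⟩
      have h4 : 0 < (Finset.univ.filter fun j' => ((c j').1 < (c j).1 ∨
          (c j').1 = (c j).1 ∧ (c j).2 ≤ (c j').2) ∧ T (c j') = x).card := by omega
      obtain ⟨y, hy⟩ := Finset.card_pos.1 h4
      simp only [Finset.mem_filter] at hy
      exact Finset.mem_image.2 ⟨y, Finset.mem_univ _, hy.2.2⟩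
  · rintro ⟨hoff, hs, hmono, hb, hcl⟩
    have hb' : ∀ j, 2 - k ≤ T (c j) := fun j =>
      hb _ (Finset.mem_image.2 ⟨j, Finset.mem_univ _, rfl⟩)
    refine ⟨⟨?_, hoff, ?_, ?_⟩, ?_⟩
    · rintro p (hp | ⟨j, rfl⟩)
      · have := hs p hp
        obtain ⟨h1, h2, h3⟩ := hp
        omega
      · have := hb' j; omega
    · rintro i j1 j2 hj (h1 | ⟨x, h1⟩) (h2 | ⟨y, h2⟩)
      · have e1 := hs _ h1
        have e2 := hs _ h2
        simp only at e1 e2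
        omega
      · have := h1.1
        simp only [c, Prod.mk.injEq] at h2 this
        omega
      · have := h2.1
        simp only [c, Prod.mk.injEq] at h1 this
        omega
      · rw [← h1, ← h2]
        simp only [c, Prod.mk.injEq] at h1 h2
        exact hmono.monotone (Fin.le_def.2 (by omega))
    · rintro i1 i2 j hi (h1 | ⟨x, h1⟩) (h2 | ⟨y, h2⟩)
      · have e1 := hs _ h1
        have e2 := hs _ h2
        simp only at e1 e2
        omega
      · have e1 := hs _ h1
        have g := hb' y
        obtain ⟨h3, h4, h5⟩ := h1
        rw [← h2]
        simp only [c, Prod.mk.injEq] at h2 h3 h4 h5 e1 g ⊢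
        omega
      · have := h2.1
        simp only [c, Prod.mk.injEq] at h1 this
        omega
      · rw [← h1, ← h2]
        simp only [c, Prod.mk.injEq] at h1 h2
        exact hmono (Fin.lt_def.2 (by omega))
    · rw [lattice_iff hc hci hs]
      intro j v hv
      rcases Nat.eq_zero_or_pos (Finset.univ.filter fun j' => ((c j').1 < (c j).1 ∨
          (c j').1 = (c j).1 ∧ (c j).2 ≤ (c j').2) ∧ T (c j') = v + 1).card with h | h
      · omega
      · have h1 := card_filter_le_one (v := v + 1) hmono (fun j' => (c j').1 < (c j).1 ∨
          (c j').1 = (c j).1 ∧ (c j).2 ≤ (c j').2)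
        simp only [Function.comp] at h1
        by_cases hvn : v ≤ n
        · omega
        · obtain ⟨x, hx⟩ := Finset.card_pos.1 h
          simp only [Finset.mem_filter] at hx
          obtain ⟨y, -, hy⟩ := Finset.mem_image.1
            (hcl v (by omega) (Finset.mem_image.2 ⟨x, Finset.mem_univ _, hx.2.2⟩))
          have hyx : y < x := by
            rw [← hmono.lt_iff_lt, hy]
            have := hx.2.2
            simp only [Function.comp]
            omega
          have : 0 < (Finset.univ.filter fun j' => ((c j').1 < (c j).1 ∨
              (c j').1 = (c j).1 ∧ (c j).2 ≤ (c j').2) ∧ T (c j') = v).card := by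
            rw [Finset.card_pos]
            refine ⟨y, ?_⟩
            simp only [Finset.mem_filter, Finset.mem_univ, true_and]
            refine ⟨?_, hy⟩
            have hr := hx.2.1
            have : (y : ℕ) < x := hyx
            simp only [c] at hr ⊢
            omega
          omega

/-! ### Comparison of the two families -/

/-- A set closed under predecessors above `n + 1` is an arbitrary part below `n + 1` together with
an interval starting at `n + 1`. -/
lemma eq_union_Icc {n m : ℕ} {B : Finset ℕ} (hB : B.card = m)
    (hcl : ∀ x, n + 1 ≤ x → x + 1 ∈ B → x ∈ B) :
    B = B.filter (· ≤ n) ∪ Finset.Icc (n + 1) (n + (m - (B.filter (· ≤ n)).card)) := by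
  have hdown : ∀ d x, n + 1 ≤ x → x + d ∈ B → x ∈ B := by
    intro d
    induction d with
    | zero => intro x _ h; exact h
    | succ d ih => intro x hx h; exact ih x hx (hcl _ (by omega) h)
  have hcard : (B.filter (· ≤ n)).card + (B.filter (¬ · ≤ n)).card = m := by
    rw [Finset.card_filter_add_card_filter_not, hB]
  set C := B.filter (¬ · ≤ n) with hC
  have hCI : C = Finset.Icc (n + 1) (n + C.card) := by
    -- For `x ∈ C` the whole interval from `n + 1` to `x` lies in `C`, so `x - n ≤ |C|`.
    have hsub : C ⊆ Finset.Icc (n + 1) (n + C.card) := by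
      intro x hx
      have hx' := Finset.mem_filter.1 hx
      have : Finset.Icc (n + 1) x ⊆ C := by
        intro y hy
        rw [Finset.mem_Icc] at hy
        refine Finset.mem_filter.2 ⟨hdown (x - y) y hy.1 ?_, by omega⟩
        rw [Nat.add_sub_cancel' hy.2]
        exact hx'.1
      have := Finset.card_le_card this
      rw [Nat.card_Icc] at this
      rw [Finset.mem_Icc]
      omega
    exact Finset.eq_of_subset_of_card_le hsub (by simp)
  have h1 : m - (B.filter (· ≤ n)).card = C.card := by omega
  rw [h1, ← hCI, hC, Finset.filter_union_filter_not_eq]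

lemma nuA_eq {n m v : ℕ} {A : Finset ℕ} (hA : ∀ x ∈ A, x ≤ n) (hv : 1 ≤ v) :
    nuA n m A v = n + 1 - v +
      (if v ∈ A ∪ Finset.Icc (n + 1) (n + (m - A.card)) then 1 else 0) := by
  have := hA v
  simp only [nuA, Finset.mem_union, Finset.mem_Icc]
  by_cases h : v ∈ A
  · have := hA v h
    simp only [h, true_or, if_true]
    rw [if_pos ⟨hv, this⟩, if_neg (by omega)]
  · simp only [h, false_or, if_false]
    congr 1
    split_ifs <;> omega

/-- Let `n ≥ 1`, `0 ≤ k ≤ 1`, and let `λ = (m)` be a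
partition with a single part, `m ≤ k + n`.  Then
`s_{𝒮(λᵗ,k,n)} - s_{𝒮(λ,k,n)} = Σ_A s_{ν(A)}`, the sum over all subsets
`A ⊆ {2-k, 3-k, …, n}` with `|A| ≤ m - 2`: coefficientwise, for every content
`ν`, the LR coefficient of `s_ν` in `s_{𝒮(λᵗ,k,n)}` equals the one in
`s_{𝒮(λ,k,n)}` plus the number of such subsets `A` with `ν(A) = ν`. -/
theorem singleRow_transpose_diff_formula
    (n k m : ℕ) (hn : 1 ≤ n) (hk : k ≤ 1) (hm : 1 ≤ m) (hmn : m ≤ k + n) :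
    ∀ nu : ℕ → ℕ,
      LRcount (SBF (fun i => if i < m then 1 else 0) k n) nu =
      LRcount (SBF (fun i => if i = 0 then m else 0) k n) nu +
      ({A : Finset ℕ | ↑A ⊆ Set.Icc (2 - k) n ∧ A.card + 2 ≤ m ∧
          ∀ v, 1 ≤ v → nuA n m A v = nu v}).ncard := by
  intro nu
  rw [SBF_col n k m hk, SBF_row n k m hk,
    LRcount_eq (c := fun j : Fin m => (n + (j : ℕ), 0)) (fun j => by simp)
      (fun i j h => by
        simp only [Prod.mk.injEq, and_true] at h
        exact Fin.ext (by omega))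
      (fun B => (∀ x ∈ B, 2 - k ≤ x) ∧ ∀ x, n + 1 ≤ x → x + 1 ∈ B → x ∈ B)
      (col_char hn hk),
    LRcount_eq (c := fun j : Fin m => (n, (j : ℕ))) (fun j => by simp)
      (fun i j h => by
        simp only [Prod.mk.injEq, true_and] at h
        exact Fin.ext (by omega))
      (fun B => ∀ x ∈ B, 2 - k ≤ x ∧ x ≤ n + 1)
      (row_char hn hk hmn)]
  set Row := {B : Finset ℕ | B.card = m ∧ (∀ x ∈ B, 2 - k ≤ x ∧ x ≤ n + 1) ∧
    ∀ v, 1 ≤ v → n + 1 - v + (if v ∈ B then 1 else 0) = nu v} with hRow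
  set Sub := {A : Finset ℕ | ↑A ⊆ Set.Icc (2 - k) n ∧ A.card + 2 ≤ m ∧
    ∀ v, 1 ≤ v → nuA n m A v = nu v} with hSub
  set fill : Finset ℕ → Finset ℕ := fun A => A ∪ Finset.Icc (n + 1) (n + (m - A.card)) with hfill
  have hle : ∀ A ∈ Sub, ∀ x ∈ A, x ≤ n := fun A hA x hx => (hA.1 hx).2
  have hfilter : ∀ A ∈ Sub, (fill A).filter (· ≤ n) = A := by
    intro A hA
    ext x
    simp only [hfill, Finset.mem_filter, Finset.mem_union, Finset.mem_Icc]
    constructor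
    · rintro ⟨h | h, h'⟩
      · exact h
      · omega
    · exact fun h => ⟨Or.inl h, hle A hA x h⟩
  have hinj : Set.InjOn fill Sub := by
    intro A hA A' hA' h
    rw [← hfilter A hA, h, hfilter A' hA']
  have hRfin : Row.Finite := by
    refine (Finset.finite_toSet (Finset.Icc (2 - k) (n + 1)).powerset).subset fun B hB => ?_
    rw [Finset.mem_coe, Finset.mem_powerset]
    exact fun x hx => Finset.mem_Icc.2 (hB.2.1 x hx)
  have hSfin : Sub.Finite := by
    refine (Finset.finite_toSet (Finset.Icc (2 - k) n).powerset).subset fun A hA => ?_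
    rw [Finset.mem_coe, Finset.mem_powerset]
    exact fun x hx => Finset.mem_Icc.2 (hA.1 hx)
  rw [← hinj.ncard_image, ← Set.ncard_union_eq _ hRfin (hSfin.image _)]
  · congr 1
    ext B
    simp only [Set.mem_union, Set.mem_image]
    constructor
    · rintro ⟨hB, ⟨hlow, hcl⟩, hnu⟩
      have hBe := eq_union_Icc hB hcl
      set A := B.filter (· ≤ n) with hA
      have hAle : ∀ x ∈ A, x ≤ n := fun x hx => (Finset.mem_filter.1 hx).2
      by_cases hc : A.card + 2 ≤ m
      · refine Or.inr ⟨A, ⟨fun x hx => ?_, hc, fun v hv => ?_⟩, hBe.symm⟩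
        · exact ⟨hlow x (Finset.mem_filter.1 hx).1, hAle x hx⟩
        · rw [nuA_eq hAle hv, ← hBe]
          exact hnu v hv
      · refine Or.inl ⟨hB, fun x hx => ⟨hlow x hx, ?_⟩, hnu⟩
        rw [hBe, Finset.mem_union, Finset.mem_Icc] at hx
        rcases hx with hx | hx
        · have := hAle x hx; omega
        · omega
    · rintro (⟨hB, hb, hnu⟩ | ⟨A, hA, rfl⟩)
      · refine ⟨hB, ⟨fun x hx => (hb x hx).1, fun x hx hx1 => ?_⟩, hnu⟩
        have := (hb _ hx1).2
        omega
      · have hAle := hle A hA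
        obtain ⟨h1, h2, h3⟩ := hA
        refine ⟨?_, ⟨fun x hx => ?_, fun x hx hx1 => ?_⟩, fun v hv => ?_⟩
        · rw [hfill, Finset.card_union_of_disjoint, Nat.card_Icc]
          · omega
          · rw [Finset.disjoint_left]
            intro x hx hx'
            have := hAle x hx
            rw [Finset.mem_Icc] at hx'
            omega
        · simp only [hfill, Finset.mem_union, Finset.mem_Icc] at hx
          rcases hx with hx | hx
          · exact (h1 hx).1
          · omega
        · simp only [hfill, Finset.mem_union, Finset.mem_Icc] at hx1 ⊢
          rcases hx1 with hx1 | hx1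
          · have := hAle _ hx1
            omega
          · right; omega
        · rw [← h3 v hv, nuA_eq hAle hv]
  · -- The two families are told apart by the letter `n + 2`.
    rw [Set.disjoint_left]
    rintro _ hB ⟨A, hA, rfl⟩
    have h2 : n + 2 ∈ fill A := by
      have := hA.2.1
      simp only [hfill, Finset.mem_union, Finset.mem_Icc]
      right
      omega
    have := (hB.2.1 _ h2).2
    omega
end

section
/- Let n be a positive integer, let 0 ≤ k ≤ 1, and let λ be a partition with a single part satisfying λ_1 ≤ k+n. Then the Schur expansion of s_{S(λ^t,k,n)} − s_{S(λ,k,n)} is multiplicity-free: every coefficient in its expansion in the Schur basis is 0 or 1. In particular, for subsets A, A' ⊆ {2−k, …, n} with |A|, |A'| ≤ λ_1 − 2, the equality ν(A) = ν(A') of the partitions δ_n + e_A + (0^n, 1^{λ_1−|A|}) and δ_n + e_{A'} + (0^n, 1^{λ_1−|A'|}) implies A = A'. -/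
/-- `D` coincides with the staircase `Δ_n` in rows `0, …, n-1`. -/
def StairTop (n k : ℕ) (D : Set (ℕ × ℕ)) : Prop :=
  ∀ p : ℕ × ℕ, p.1 < n → (p ∈ D ↔ k + n - 1 - p.1 ≤ p.2 ∧ p.2 < n + k)

/-- In the first `N` rows of `D`, every column of `T` reads `1, 2, 3, …` downwards from the top of
the staircase, i.e. `T (i, j) = i + j + 2 - n - k`. -/
def Forced (n k N : ℕ) (D : Set (ℕ × ℕ)) (T : ℕ × ℕ → ℕ) : Prop :=
  ∀ i j, i < N → (i, j) ∈ D → T (i, j) + n + k = i + j + 2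

/-! ### Fillings of the staircase -/

lemma ncard_staircase {n k N : ℕ} {D : Set (ℕ × ℕ)} {T : ℕ × ℕ → ℕ} (hN : N ≤ n)
    (hD : StairTop n k D) (hF : Forced n k N D T) {v : ℕ} (hv : 1 ≤ v) :
    {p ∈ D | p.1 < N ∧ T p = v}.ncard = N + 1 - v := by
  have h : {p ∈ D | p.1 < N ∧ T p = v} =
      (fun i => (i, v + n + k - 2 - i)) '' (Finset.Ico (v - 1) N : Set ℕ) := by
    ext ⟨i, j⟩
    simp only [Set.mem_ofPred_eq, Set.mem_image, Finset.coe_Ico, Set.mem_Ico, Prod.mk.injEq]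
    constructor
    · rintro ⟨hp, hi, hT⟩
      have h1 := hF i j hi hp
      have h2 := (hD (i, j) (by simp; omega)).1 hp
      simp only at h2
      exact ⟨i, by omega, rfl, by omega⟩
    · rintro ⟨i', ⟨h1, h2⟩, rfl, h3⟩
      have hp : (i', j) ∈ D := (hD (i', j) (by simp; omega)).2 (by simp only; omega)
      have := hF i' j h2 hp
      exact ⟨hp, h2, by omega⟩
  rw [h, Set.ncard_image_of_injective _ (fun a b hab => (Prod.mk.inj hab).1),
    Set.ncard_coe_finset, Nat.card_Ico]
  omega

/-- Cells of value smaller than `T (N, j)` read up to `(N, j)` all lie above row `N`. -/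
lemma ncard_read_lt {n k N : ℕ} {D : Set (ℕ × ℕ)} {T : ℕ × ℕ → ℕ} (hfin : D.Finite) (hN : N ≤ n)
    (hD : StairTop n k D) (hF : Forced n k N D T) (hT : IsSSYT D T) {j v : ℕ}
    (hq : (N, j) ∈ D) (hv : 1 ≤ v) (hlt : v < T (N, j)) :
    {p ∈ readUpTo D (N, j) | T p = v}.ncard ≤ N + 1 - v := by
  rw [← ncard_staircase hN hD hF hv]
  refine Set.ncard_le_ncard ?_ (hfin.subset fun p hp => hp.1)
  rintro ⟨a, b⟩ ⟨⟨hp, hr⟩, hTp⟩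
  rcases hr with hr | ⟨hr, hr'⟩
  · exact ⟨hp, hr, hTp⟩
  · simp only at hr hr'
    subst hr
    have := hT.2.2.1 a j b hr' hq hp
    omega

lemma lattice_le {n k N : ℕ} {D : Set (ℕ × ℕ)} {T : ℕ × ℕ → ℕ} (hfin : D.Finite) (hN : N ≤ n)
    (hD : StairTop n k D) (hF : Forced n k N D T) (hT : IsSSYT D T) (hL : IsLattice D T) {j : ℕ}
    (hq : (N, j) ∈ D) : T (N, j) ≤ N + 1 := by
  by_contra! hlt
  obtain ⟨v, hv⟩ : ∃ v, T (N, j) = v + 1 := ⟨T (N, j) - 1, by omega⟩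
  have h1 := hL _ hq v (by omega)
  have h2 := ncard_read_lt hfin hN hD hF hT hq (v := v) (by omega) (by omega)
  have h3 : 0 < {p ∈ readUpTo D (N, j) | T p = v + 1}.ncard :=
    (Set.ncard_pos (hfin.subset fun p hp => hp.1.1)).2 ⟨(N, j), ⟨hq, Or.inr ⟨rfl, le_rfl⟩⟩, hv⟩
  omega

lemma lattice_no_repeat {n k N : ℕ} {D : Set (ℕ × ℕ)} {T : ℕ × ℕ → ℕ} (hfin : D.Finite)
    (hN : N ≤ n) (hD : StairTop n k D) (hF : Forced n k N D T) (hT : IsSSYT D T)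
    (hL : IsLattice D T) {j j' : ℕ} (hq : (N, j) ∈ D) (hq' : (N, j') ∈ D) (hj : j < j')
    (h2 : 2 ≤ T (N, j')) : T (N, j) < T (N, j') := by
  refine lt_of_le_of_ne (hT.2.2.1 N j j' hj.le hq hq') fun heq => ?_
  obtain ⟨v, hv⟩ : ∃ v, T (N, j) = v + 1 := ⟨T (N, j) - 1, by omega⟩
  have hle := lattice_le hfin hN hD hF hT hL hq
  have h1 := hL _ hq v (by omega)
  have h3 := ncard_read_lt hfin hN hD hF hT hq (v := v) (by omega) (by omega)
  have h4 := ncard_staircase hN hD hF (v := v + 1) (by omega)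
  have hfin' : {p ∈ D | p.1 < N ∧ T p = v + 1}.Finite := hfin.subset fun p hp => hp.1
  -- The cells `(N, j)` and `(N, j')` are two further occurrences of `v + 1`.
  have h5 : (insert (N, j) (insert (N, j') {p ∈ D | p.1 < N ∧ T p = v + 1})).ncard ≤
      {p ∈ readUpTo D (N, j) | T p = v + 1}.ncard := by
    refine Set.ncard_le_ncard ?_ (hfin.subset fun p hp => hp.1.1)
    rintro p (rfl | rfl | ⟨hp, hr, hTp⟩)
    · exact ⟨⟨hq, Or.inr ⟨rfl, le_rfl⟩⟩, hv⟩
    · exact ⟨⟨hq', Or.inr ⟨rfl, hj.le⟩⟩, heq ▸ hv⟩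
    · exact ⟨⟨hp, Or.inl hr⟩, hTp⟩
  rw [Set.ncard_insert_of_notMem _ (hfin'.insert _), Set.ncard_insert_of_notMem _ hfin'] at h5
  · omega
  · rintro ⟨-, h, -⟩
    exact lt_irrefl _ h
  · rintro (h | ⟨-, h, -⟩)
    · have := (Prod.mk.inj h).2
      omega
    · exact lt_irrefl _ h

lemma staircase_lower {n k : ℕ} {D : Set (ℕ × ℕ)} {T : ℕ × ℕ → ℕ} (hD : StairTop n k D)
    (hT : IsSSYT D T) (i j : ℕ) (hi : i < n) (hp : (i, j) ∈ D) : i + j + 2 ≤ T (i, j) + n + k := by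
  induction i with
  | zero =>
    have h1 := hT.1 _ hp
    have h2 := (hD _ hi).1 hp
    simp only at h2
    omega
  | succ i ih =>
    have h1 := hT.1 _ hp
    have h2 := (hD _ hi).1 hp
    simp only at h2
    by_cases h : (i, j) ∈ D
    · have h3 := ih (by omega) h
      have h4 := hT.2.2.2 i (i + 1) j (by omega) h hp
      omega
    · rw [hD (i, j) (by simp; omega)] at h
      simp only at h
      omega

/-- A Littlewood-Richardson filling has only one possible restriction to the staircase. -/
lemma staircase_forced {n k : ℕ} {D : Set (ℕ × ℕ)} {T : ℕ × ℕ → ℕ} (hfin : D.Finite)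
    (hD : StairTop n k D) (hT : IsSSYT D T) (hL : IsLattice D T) :
    ∀ N, N ≤ n → Forced n k N D T := by
  intro N
  induction N with
  | zero => intro _ i j hi; omega
  | succ N ih =>
    intro hN
    have hF := ih (by omega)
    -- Row `N` decreases strictly from at most `N + 1` when read from right to left.
    have key : ∀ d, d ≤ N → T (N, n + k - 1 - d) + d ≤ N + 1 := by
      intro d
      induction d with
      | zero =>
        intro _
        exact lattice_le hfin (by omega) hD hF hT hL
          ((hD _ (by simp only; omega)).2 (by simp only; omega))
      | succ d ihd =>
        intro hd
        have hq : (N, n + k - 1 - (d + 1)) ∈ D :=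
          (hD _ (by simp only; omega)).2 (by simp only; omega)
        have hq' : (N, n + k - 1 - d) ∈ D :=
          (hD _ (by simp only; omega)).2 (by simp only; omega)
        have h1 := staircase_lower hD hT _ _ (by omega) hq'
        have h2 := lattice_no_repeat hfin (by omega) hD hF hT hL hq hq' (by omega) (by omega)
        have h3 := ihd (by omega)
        omega
    intro i j hi hp
    rcases Nat.lt_succ_iff_lt_or_eq.1 hi with h | rfl
    · exact hF i j h hp
    · have h1 := staircase_lower hD hT _ _ (by omega) hp
      have h2 := (hD _ (by simp only; omega)).1 hp
      simp only at h2
      have h3 := key (n + k - 1 - j) (by omega)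
      rw [show n + k - 1 - (n + k - 1 - j) = j by omega] at h3
      omega

/-! ### The two shapes -/

/-- The shape `𝒮((m),k,n)`. -/
abbrev rowShape (n k m : ℕ) : Set (ℕ × ℕ) := SBF (fun i => if i = 0 then m else 0) k n

/-- The shape `𝒮((1^m),k,n)`. -/
abbrev colShape (n k m : ℕ) : Set (ℕ × ℕ) := SBF (fun i => if i < m then 1 else 0) k n

lemma mem_rowShape {n k m : ℕ} (hk : k ≤ 1) (i j : ℕ) : (i, j) ∈ rowShape n k m ↔
    (i < n ∧ k + n - 1 - i ≤ j ∧ j < n + k) ∨ (i = n ∧ j < m) := by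
  simp only [rowShape, SBF, staircaseCells, foundationCells, Set.mem_union, Set.mem_ofPred_eq]
  split_ifs <;> omega

lemma mem_colShape {n k m : ℕ} (hk : k ≤ 1) (i j : ℕ) : (i, j) ∈ colShape n k m ↔
    (i < n ∧ k + n - 1 - i ≤ j ∧ j < n + k) ∨ (n ≤ i ∧ i < n + m ∧ j = 0) := by
  simp only [colShape, SBF, staircaseCells, foundationCells, Set.mem_union, Set.mem_ofPred_eq]
  split_ifs <;> omega

lemma rowShape_finite {n k m : ℕ} (hk : k ≤ 1) : (rowShape n k m).Finite := by
  refine ((Set.finite_Iio (n + 1)).prod (Set.finite_Iio (n + k + m))).subset ?_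
  rintro ⟨i, j⟩ h
  rw [mem_rowShape hk] at h
  simp only [Set.mem_prod, Set.mem_Iio]
  omega

lemma colShape_finite {n k m : ℕ} (hk : k ≤ 1) : (colShape n k m).Finite := by
  refine ((Set.finite_Iio (n + m)).prod (Set.finite_Iio (n + k + 1))).subset ?_
  rintro ⟨i, j⟩ h
  rw [mem_colShape hk] at h
  simp only [Set.mem_prod, Set.mem_Iio]
  omega

lemma rowShape_top {n k m : ℕ} (hk : k ≤ 1) : StairTop n k (rowShape n k m) := by
  rintro ⟨i, j⟩ h
  rw [mem_rowShape hk]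
  simp only at h ⊢
  omega

lemma colShape_top {n k m : ℕ} (hk : k ≤ 1) : StairTop n k (colShape n k m) := by
  rintro ⟨i, j⟩ h
  rw [mem_colShape hk]
  simp only at h ⊢
  omega

/-! ### Uniqueness for the column foundation -/

/-- The entries of the column foundation are the values whose multiplicity exceeds the multiplicity
`n + 1 - v` they have in the staircase. -/
lemma mem_column_iff {n k m : ℕ} (hk : k ≤ 1) {T : ℕ × ℕ → ℕ}
    (hT : IsSSYT (colShape n k m) T) (hL : IsLattice (colShape n k m) T) {v : ℕ} (hv : 1 ≤ v) :
    (∃ i, i < m ∧ T (n + i, 0) = v) ↔ n + 1 - v < contentOf (colShape n k m) T v := by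
  have hfin := colShape_finite (n := n) (m := m) hk
  have hD := colShape_top (n := n) (m := m) hk
  have hF := staircase_forced hfin hD hT hL n le_rfl
  rw [← ncard_staircase le_rfl hD hF hv, contentOf]
  constructor
  · rintro ⟨i, hi, hTi⟩
    refine Set.ncard_lt_ncard ?_ (hfin.subset fun p hp => hp.1)
    refine (Set.ssubset_iff_of_subset fun p hp => And.intro hp.1 hp.2.2).2 ⟨(n + i, 0), ?_, ?_⟩
    · exact ⟨(mem_colShape hk _ _).2 (by omega), hTi⟩
    · rintro ⟨-, h, -⟩
      simp only at h
      omega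
  · intro h
    by_contra! hno
    refine absurd h (not_lt.2 (Set.ncard_le_ncard ?_ (hfin.subset fun p hp => hp.1)))
    rintro ⟨a, b⟩ ⟨hp, hTp⟩
    refine ⟨hp, ?_, hTp⟩
    rcases (mem_colShape hk _ _).1 hp with h1 | ⟨h1, h2, rfl⟩
    · exact h1.1
    · refine absurd ?_ (hno (a - n) (by omega))
      rwa [show n + (a - n) = a by omega]

lemma column_unique {n k m : ℕ} (hk : k ≤ 1) {T₁ T₂ : ℕ × ℕ → ℕ}
    (hT₁ : IsSSYT (colShape n k m) T₁) (hL₁ : IsLattice (colShape n k m) T₁)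
    (hT₂ : IsSSYT (colShape n k m) T₂) (hL₂ : IsLattice (colShape n k m) T₂)
    (hc : ∀ v, 1 ≤ v → contentOf (colShape n k m) T₁ v = contentOf (colShape n k m) T₂ v) :
    T₁ = T₂ := by
  have hfin := colShape_finite (n := n) (m := m) hk
  have hD := colShape_top (n := n) (m := m) hk
  have hmono : ∀ T, IsSSYT (colShape n k m) T → StrictMono fun i : Fin m => T (n + i, 0) := by
    intro T hT a b hab
    have hab' : (a : ℕ) < b := hab
    exact hT.2.2.2 _ _ 0 (by omega) ((mem_colShape hk _ _).2 (by omega))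
      ((mem_colShape hk _ _).2 (by omega))
  have hrange : ∀ T, IsSSYT (colShape n k m) T → IsLattice (colShape n k m) T →
      Set.range (fun i : Fin m => T (n + i, 0)) =
        {v | 1 ≤ v ∧ n + 1 - v < contentOf (colShape n k m) T v} := by
    intro T hT hL
    ext v
    constructor
    · rintro ⟨i, rfl⟩
      have h1 : 1 ≤ T (n + i, 0) := hT.1 _ ((mem_colShape hk _ _).2 (by omega))
      exact ⟨h1, (mem_column_iff hk hT hL h1).1 ⟨i, i.2, rfl⟩⟩
    · rintro ⟨h1, h2⟩
      obtain ⟨i, hi, h⟩ := (mem_column_iff hk hT hL h1).2 h2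
      exact ⟨⟨i, hi⟩, h⟩
  have hcol : (fun i : Fin m => T₁ (n + i, 0)) = fun i : Fin m => T₂ (n + i, 0) := by
    rw [← StrictMono.range_inj (hmono _ hT₁) (hmono _ hT₂), hrange _ hT₁ hL₁, hrange _ hT₂ hL₂]
    ext v
    exact and_congr_right fun h => by rw [hc v h]
  funext ⟨i, j⟩
  by_cases hp : (i, j) ∈ colShape n k m
  · rcases (mem_colShape hk _ _).1 hp with h | ⟨h1, h2, rfl⟩
    · have h1 := staircase_forced hfin hD hT₁ hL₁ n le_rfl i j h.1 hp
      have h2 := staircase_forced hfin hD hT₂ hL₂ n le_rfl i j h.1 hp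
      omega
    · have := congrFun hcol ⟨i - n, by omega⟩
      simp only [show n + (i - n) = i by omega] at this
      exact this
  · rw [hT₁.2.1 _ hp, hT₂.2.1 _ hp]

/-! ### Standing the row foundation upright -/

/-- Keep the staircase rows of `T` and turn its row `n` into a column below the staircase:
the entry at `(n, j)` moves to `(n + j, 0)`. -/
def upright (n : ℕ) (T : ℕ × ℕ → ℕ) : ℕ × ℕ → ℕ := fun p =>
  if p.1 < n then T p else if p.2 = 0 then T (n, p.1 - n) else 0

lemma upright_top {n : ℕ} (T : ℕ × ℕ → ℕ) {i : ℕ} (j : ℕ) (h : i < n) :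
    upright n T (i, j) = T (i, j) := by
  simp [upright, h]

lemma upright_col (n : ℕ) (T : ℕ × ℕ → ℕ) (j : ℕ) : upright n T (n + j, 0) = T (n, j) := by
  simp [upright]

/-- The entries of the row foundation increase strictly: all entries but the first lie below a
staircase cell, hence are at least `2`, and such values are not repeated. -/
lemma row_strict {n k m : ℕ} (hn : 1 ≤ n) (hk : k ≤ 1) (hmn : m ≤ k + n) {T : ℕ × ℕ → ℕ}
    (hT : IsSSYT (rowShape n k m) T) (hL : IsLattice (rowShape n k m) T) {j j' : ℕ}
    (hj : j < j') (hj' : j' < m) : T (n, j) < T (n, j') := by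
  have hfin := rowShape_finite (n := n) (m := m) hk
  have hD := rowShape_top (n := n) (m := m) hk
  have hF := staircase_forced hfin hD hT hL n le_rfl
  have hq : (n, j) ∈ rowShape n k m := (mem_rowShape hk _ _).2 (by omega)
  have hq' : (n, j') ∈ rowShape n k m := (mem_rowShape hk _ _).2 (by omega)
  have hup : (n - 1, j') ∈ rowShape n k m := (mem_rowShape hk _ _).2 (by omega)
  have h1 := hT.1 _ hup
  have h2 := hT.2.2.2 (n - 1) n j' (by omega) hup hq'
  exact lattice_no_repeat hfin le_rfl hD hF hT hL hq hq' hj (by omega)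

lemma upright_isSSYT {n k m : ℕ} (hn : 1 ≤ n) (hk : k ≤ 1) (hmn : m ≤ k + n) {T : ℕ × ℕ → ℕ}
    (hT : IsSSYT (rowShape n k m) T) (hL : IsLattice (rowShape n k m) T) :
    IsSSYT (colShape n k m) (upright n T) := by
  have hcol : ∀ i j, n ≤ i → (i, j) ∈ colShape n k m → ∃ a, a < m ∧ i = n + a ∧ j = 0 := by
    intro i j hi hp
    rw [mem_colShape hk] at hp
    exact ⟨i - n, by omega, by omega, by omega⟩
  have htop : ∀ i j, i < n → ((i, j) ∈ colShape n k m ↔ (i, j) ∈ rowShape n k m) := by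
    intro i j hi
    rw [mem_colShape hk, mem_rowShape hk]
    omega
  refine ⟨?_, ?_, ?_, ?_⟩
  · rintro ⟨i, j⟩ hp
    rcases lt_or_ge i n with hi | hi
    · rw [upright_top _ _ hi]
      exact hT.1 _ ((htop i j hi).1 hp)
    · obtain ⟨a, ha, rfl, rfl⟩ := hcol i j hi hp
      rw [upright_col]
      exact hT.1 _ ((mem_rowShape hk _ _).2 (by omega))
  · rintro ⟨i, j⟩ hp
    rcases lt_or_ge i n with hi | hi
    · rw [upright_top _ _ hi]
      exact hT.2.1 _ fun h => hp ((htop i j hi).2 h)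
    · simp only [upright, not_lt.2 hi, if_false]
      split_ifs with hj
      · refine hT.2.1 _ fun h => hp ?_
        rw [mem_rowShape hk] at h
        rw [mem_colShape hk]
        omega
      · rfl
  · intro i j₁ j₂ hj h₁ h₂
    rcases lt_or_ge i n with hi | hi
    · rw [upright_top _ _ hi, upright_top _ _ hi]
      exact hT.2.2.1 _ _ _ hj ((htop _ _ hi).1 h₁) ((htop _ _ hi).1 h₂)
    · obtain ⟨a, ha, rfl, rfl⟩ := hcol _ _ hi h₁
      obtain ⟨b, hb, -, rfl⟩ := hcol _ _ hi h₂
      exact le_rfl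
  · intro i₁ i₂ j hi h₁ h₂
    rcases lt_or_ge i₂ n with hi₂ | hi₂
    · rw [upright_top _ _ hi₂, upright_top _ _ (hi.trans hi₂)]
      exact hT.2.2.2 _ _ _ hi ((htop _ _ (hi.trans hi₂)).1 h₁) ((htop _ _ hi₂).1 h₂)
    · obtain ⟨b, hb, rfl, rfl⟩ := hcol _ _ hi₂ h₂
      rw [upright_col]
      rcases lt_or_ge i₁ n with hi₁ | hi₁
      · rw [upright_top _ _ hi₁]
        have h3 := hT.2.2.2 i₁ n 0 hi₁ ((htop _ _ hi₁).1 h₁)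
          ((mem_rowShape hk _ _).2 (by omega))
        rcases Nat.eq_zero_or_pos b with rfl | hb0
        · exact h3
        · exact h3.trans (row_strict hn hk hmn hT hL hb0 hb)
      · obtain ⟨a, ha, rfl, -⟩ := hcol _ _ hi₁ h₁
        rw [upright_col]
        exact row_strict hn hk hmn hT hL (by omega) hb

lemma upright_isLattice {n k m : ℕ} (hn : 1 ≤ n) (hk : k ≤ 1) (hmn : m ≤ k + n) {T : ℕ × ℕ → ℕ}
    (hT : IsSSYT (rowShape n k m) T) (hL : IsLattice (rowShape n k m) T) :
    IsLattice (colShape n k m) (upright n T) := by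
  have hT' := upright_isSSYT hn hk hmn hT hL
  have hfinR := rowShape_finite (n := n) (m := m) hk
  have hDR := rowShape_top (n := n) (m := m) hk
  have hFR := staircase_forced hfinR hDR hT hL n le_rfl
  have hfin := colShape_finite (n := n) (m := m) hk
  have hD := colShape_top (n := n) (m := m) hk
  have hF : Forced n k n (colShape n k m) (upright n T) := by
    intro i j hi hp
    rw [upright_top _ _ hi]
    exact hFR i j hi ((hDR (i, j) hi).2 ((hD (i, j) hi).1 hp))
  rintro ⟨a, b⟩ hq v hv
  rcases lt_or_ge a n with ha | ha
  · -- Up to a staircase cell, both readings see the same cells with the same entries.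
    have heq : ∀ w, {p ∈ readUpTo (colShape n k m) (a, b) | upright n T p = w} =
        {p ∈ readUpTo (rowShape n k m) (a, b) | T p = w} := by
      intro w
      ext ⟨i, j⟩
      simp only [readUpTo, Set.mem_ofPred_eq]
      rcases lt_or_ge i n with hi | hi
      · rw [upright_top _ _ hi, hD (i, j) hi, hDR (i, j) hi]
      · constructor <;> rintro ⟨⟨-, h⟩, -⟩ <;> omega
    rw [heq, heq]
    exact hL (a, b) ((hDR (a, b) ha).2 ((hD (a, b) ha).1 hq)) v hv
  · set V := {p ∈ colShape n k m | n ≤ p.1 ∧ upright n T p = v + 1} with hV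
    have hVfin : V.Finite := hfin.subset fun p hp => hp.1
    have hsub : {p ∈ readUpTo (colShape n k m) (a, b) | upright n T p = v + 1}.ncard ≤
        (n + 1 - (v + 1)) + V.ncard := by
      rw [← ncard_staircase le_rfl hD hF (v := v + 1) (by omega)]
      refine (Set.ncard_le_ncard ?_ (Set.Finite.union (hfin.subset fun p hp => hp.1) hVfin)).trans
        (Set.ncard_union_le _ _)
      rintro p ⟨⟨hp, -⟩, hTp⟩
      rcases lt_or_ge p.1 n with h | h
      · exact Or.inl ⟨hp, h, hTp⟩
      · exact Or.inr ⟨hp, h, hTp⟩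
    have hsup : n + 1 - v ≤
        {p ∈ readUpTo (colShape n k m) (a, b) | upright n T p = v}.ncard := by
      rw [← ncard_staircase le_rfl hD hF hv]
      refine Set.ncard_le_ncard ?_ (hfin.subset fun p hp => hp.1.1)
      rintro p ⟨hp, h, hTp⟩
      exact ⟨⟨hp, Or.inl (lt_of_lt_of_le h ha)⟩, hTp⟩
    have hcol : ∀ p ∈ V, ∃ c, c < m ∧ p = (n + c, 0) := by
      rintro ⟨i, j⟩ ⟨hp, hi, -⟩
      rw [mem_colShape hk] at hp
      simp only at hi
      exact ⟨i - n, by omega, by ext <;> simp only <;> omega⟩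
    rcases le_or_gt v n with hvn | hvn
    · have hone : V.ncard ≤ 1 := by
        rw [Set.ncard_le_one hVfin]
        intro p hp q hq'
        obtain ⟨c, hc, rfl⟩ := hcol p hp
        obtain ⟨d, hd, rfl⟩ := hcol q hq'
        have h1 := hp.2.2
        have h2 := hq'.2.2
        rcases lt_trichotomy c d with h | rfl | h
        · have := hT'.2.2.2 _ _ 0 (show n + c < n + d by omega) hp.1 hq'.1
          omega
        · rfl
        · have := hT'.2.2.2 _ _ 0 (show n + d < n + c by omega) hq'.1 hp.1
          omega
      omega
    · have hzero : V = ∅ := by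
        rw [Set.eq_empty_iff_forall_notMem]
        intro p hp
        obtain ⟨c, hc, rfl⟩ := hcol p hp
        have h1 := hp.2.2
        rw [upright_col] at h1
        have := lattice_le hfinR le_rfl hDR hFR hT hL
          ((mem_rowShape hk n c).2 (by omega))
        omega
      rw [hzero, Set.ncard_empty] at hsub
      omega

lemma upright_content {n k m : ℕ} (hk : k ≤ 1) (T : ℕ × ℕ → ℕ) (v : ℕ) :
    contentOf (colShape n k m) (upright n T) v = contentOf (rowShape n k m) T v := by
  -- The bijection of cells that stands the foundation upright.
  let g : ℕ × ℕ → ℕ × ℕ := fun p => if p.1 < n then p else (n + p.2, 0)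
  have himg : {p ∈ colShape n k m | upright n T p = v} =
      g '' {p ∈ rowShape n k m | T p = v} := by
    ext ⟨i, j⟩
    constructor
    · rintro ⟨hp, hv⟩
      rcases lt_or_ge i n with hi | hi
      · rw [upright_top _ _ hi] at hv
        refine ⟨(i, j), ⟨?_, hv⟩, by simp [g, hi]⟩
        exact (rowShape_top hk (i, j) hi).2 ((colShape_top hk (i, j) hi).1 hp)
      · rw [mem_colShape hk] at hp
        obtain ⟨c, rfl⟩ := Nat.exists_eq_add_of_le hi
        obtain rfl : j = 0 := by omega
        rw [upright_col] at hv
        exact ⟨(n, c), ⟨(mem_rowShape hk _ _).2 (by omega), hv⟩, by simp [g]⟩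
    · rintro ⟨⟨a, b⟩, ⟨hp, hv⟩, hg⟩
      rcases lt_or_ge a n with ha | ha
      · simp only [g, ha, if_true, Prod.mk.injEq] at hg
        obtain ⟨rfl, rfl⟩ := hg
        refine ⟨?_, by rw [upright_top _ _ ha]; exact hv⟩
        exact (colShape_top hk (a, b) ha).2 ((rowShape_top hk (a, b) ha).1 hp)
      · simp only [g, not_lt.2 ha, if_false, Prod.mk.injEq] at hg
        obtain ⟨rfl, rfl⟩ := hg
        rw [mem_rowShape hk] at hp
        obtain rfl : a = n := by omega
        exact ⟨(mem_colShape hk _ _).2 (by omega), by rw [upright_col]; exact hv⟩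
  rw [contentOf, contentOf, himg, Set.InjOn.ncard_image]
  rintro ⟨a, b⟩ ⟨hp, -⟩ ⟨c, d⟩ ⟨hq, -⟩ h
  rw [mem_rowShape hk] at hp hq
  simp only [g] at h
  split_ifs at h with h1 h2 h2
  · exact h
  · simp only [Prod.mk.injEq] at h
    omega
  · simp only [Prod.mk.injEq] at h
    omega
  · simp only [Prod.mk.injEq] at h ⊢
    omega

lemma upright_injOn {n k m : ℕ} (hk : k ≤ 1) {T₁ T₂ : ℕ × ℕ → ℕ}
    (hT₁ : IsSSYT (rowShape n k m) T₁) (hT₂ : IsSSYT (rowShape n k m) T₂)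
    (h : upright n T₁ = upright n T₂) : T₁ = T₂ := by
  funext ⟨i, j⟩
  rcases lt_trichotomy i n with hi | rfl | hi
  · rw [← upright_top T₁ j hi, h, upright_top T₂ j hi]
  · rw [← upright_col i T₁ j, h, upright_col]
  · have hp : (i, j) ∉ rowShape n k m := by
      rw [mem_rowShape hk]
      omega
    rw [hT₁.2.1 _ hp, hT₂.2.1 _ hp]

/-! ### The coefficients -/

/-- Let `n ≥ 1`, `0 ≤ k ≤ 1`, and let `λ = (m)` be a
partition with a single part, `m ≤ k + n`.  Then the Schur expansion of
`s_{𝒮(λᵗ,k,n)} - s_{𝒮(λ,k,n)}` is multiplicity-free: for every content `ν`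
the LR coefficients of the two shapes differ by at most `1` (and the
difference is nonnegative).  In particular, for subsets
`A, A' ⊆ {2-k, …, n}` with `|A|, |A'| ≤ m - 2`, the equality `ν(A) = ν(A')`
implies `A = A'`. -/
theorem singleRow_transpose_diff_multiplicityFree
    (n k m : ℕ) (hn : 1 ≤ n) (hk : k ≤ 1) (hm : 1 ≤ m) (hmn : m ≤ k + n) :
    (∀ nu : ℕ → ℕ,
      LRcount (SBF (fun i => if i = 0 then m else 0) k n) nu ≤
        LRcount (SBF (fun i => if i < m then 1 else 0) k n) nu ∧
      LRcount (SBF (fun i => if i < m then 1 else 0) k n) nu ≤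
        LRcount (SBF (fun i => if i = 0 then m else 0) k n) nu + 1) ∧
    (∀ A A' : Finset ℕ, ↑A ⊆ Set.Icc (2 - k) n → ↑A' ⊆ Set.Icc (2 - k) n →
      A.card + 2 ≤ m → A'.card + 2 ≤ m →
      (∀ v, nuA n m A v = nuA n m A' v) → A = A') := by
  refine ⟨fun nu => ?_, ?_⟩
  · have hsub : {T : ℕ × ℕ → ℕ | IsSSYT (colShape n k m) T ∧ IsLattice (colShape n k m) T ∧
        ∀ v, 1 ≤ v → contentOf (colShape n k m) T v = nu v}.Subsingleton := by
      rintro T₁ ⟨hT₁, hL₁, hc₁⟩ T₂ ⟨hT₂, hL₂, hc₂⟩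
      exact column_unique hk hT₁ hL₁ hT₂ hL₂ fun v hv => (hc₁ v hv).trans (hc₂ v hv).symm
    constructor
    · refine Set.ncard_le_ncard_of_injOn (upright n) ?_ ?_ hsub.finite
      · rintro T ⟨hT, hL, hc⟩
        exact ⟨upright_isSSYT hn hk hmn hT hL, upright_isLattice hn hk hmn hT hL,
          fun v hv => (upright_content hk T v).trans (hc v hv)⟩
      · rintro T₁ ⟨hT₁, -⟩ T₂ ⟨hT₂, -⟩ h
        exact upright_injOn hk hT₁ hT₂ h
    · have h1 : LRcount (colShape n k m) nu ≤ 1 :=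
        (Set.ncard_le_one hsub.finite).2 fun a ha b hb => hsub ha hb
      exact h1.trans (Nat.le_add_left _ _)
  · intro A A' hA hA' _ _ h
    ext v
    by_cases hv : v ≤ n
    · have := h v
      simp only [nuA] at this
      split_ifs at this <;> first | omega | simp_all
    · exact ⟨fun hm' => absurd (hA hm').2 hv, fun hm' => absurd (hA' hm').2 hv⟩
end
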